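/- Let r ≥ 2 and a ≥ 1 be fixed integers, let d > 0 be a fixed real number, and let 𝒯 be a Builder strategy tree with r colors on a board with a vertices that is legal for density restriction d. Let N : ℕ → ℕ satisfy n^{2−1/d} = o(N(n)) and N(n) = o(n²). Then for every integer k ≥ 0 and every sequence of online Painter strategies with r colors (one for each n), there exists a constant c > 0 such that the probability of the following event tends to 1 as n → ∞: the r-edge-colored board G_{N(n)} of the online game on n vertices contains a copy (as an edge-colored graph) of some leaf of 𝒯, or there is a node B at depth k in 𝒯 such that G_{N(n)} contains at least c · n^a · (N(n)·n^{−2})^k copies of B. -/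

import Mathlib

open SimpleGraph Filter Asymptotics
open scoped Classical

/-- A history of the game: the sequence of edges presented so far, together with
the colors (elements of `Fin r`, representing the colors `1,…,r`) they received. -/
abbrev EdgeHistory (V : Type) (r : ℕ) := List (Sym2 V × Fin r)

/-- A Painter strategy on vertex type `V` with `r` colors: a function assigning a color
to every pair (history, new edge). -/
abbrev PainterStrategy (V : Type) (r : ℕ) := EdgeHistory V r → Sym2 V → Fin r

/-- Auxiliary function: run a Painter strategy on a list of presented edges,
extending the given history. -/
def runPainterAux {V : Type} {r : ℕ} (π : PainterStrategy V r) :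
    EdgeHistory V r → List (Sym2 V) → EdgeHistory V r
  | h, [] => h
  | h, e :: es => runPainterAux π (h ++ [(e, π h e)]) es

/-- The colored history obtained by coloring the edges of `l` successively
according to the Painter strategy `π`. -/
def runPainter {V : Type} {r : ℕ} (π : PainterStrategy V r) (l : List (Sym2 V)) :
    EdgeHistory V r :=
  runPainterAux π [] l

/-- `G` contains a copy of `F`, i.e. a subgraph isomorphic to `F`. -/
def IsCopy {α β : Type} (F : SimpleGraph α) (G : SimpleGraph β) : Prop :=
  ∃ f : α ↪ β, ∀ u v : α, F.Adj u v → G.Adj (f u) (f v)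

/-- The graph formed by the edges of color `c` in the history `h`. -/
def colorGraph {V : Type} {r : ℕ} (h : EdgeHistory V r) (c : Fin r) : SimpleGraph V :=
  SimpleGraph.fromEdgeSet {e | (e, c) ∈ h}

/-- The history `h` contains a monochromatic copy of `F`. -/
def HasMonoCopy {α V : Type} {r : ℕ} (F : SimpleGraph α) (h : EdgeHistory V r) : Prop :=
  ∃ c : Fin r, IsCopy F (colorGraph h c)

/-- The number of edges of `G` lying entirely within the vertex set `S`. -/
noncomputable def edgesWithin {V : Type} (G : SimpleGraph V) (S : Set V) : ℕ :=
  (G.edgeSet ∩ {e | ∀ v ∈ e, v ∈ S}).ncard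

/-- `m(G) ≤ d`: every subgraph `H` of `G` with at least one vertex satisfies `e_H ≤ d · v_H`. -/
def DensityLE {V : Type} (G : SimpleGraph V) (d : ℝ) : Prop :=
  ∀ S : Finset V, S.Nonempty → (edgesWithin G (↑S : Set V) : ℝ) ≤ d * (S.card : ℝ)

/-- `G` contains no cycle and every connected component of `G` has at most `k` edges
(equivalently, `G` is acyclic and contains no connected subgraph with more than `k` edges). -/
def TreeSizeLE {V : Type} (G : SimpleGraph V) (k : ℕ) : Prop :=
  G.IsAcyclic ∧ ∀ S : Set V, (G.induce S).Connected → edgesWithin G S ≤ k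

/-- A legal sequence of moves for Builder: distinct non-loop edges. -/
def ValidEdgeSeq {V : Type} (l : List (Sym2 V)) : Prop :=
  l.Nodup ∧ ∀ e ∈ l, ¬ e.IsDiag

/-- The (uncolored) board formed by a list of edges. -/
def boardOf {V : Type} (l : List (Sym2 V)) : SimpleGraph V :=
  SimpleGraph.fromEdgeSet {e | e ∈ l}

/-- Builder has a winning strategy in the deterministic `F`-avoidance game with `r` colors
and density restriction `d`. -/
def BuilderWinsDensity {α : Type} (F : SimpleGraph α) (r : ℕ) (d : ℝ) : Prop :=
  ∃ a : ℕ, ∀ π : PainterStrategy (Fin a) r, ∃ l : List (Sym2 (Fin a)),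
    ValidEdgeSeq l ∧ (∀ i : ℕ, DensityLE (boardOf (l.take i)) d) ∧
    HasMonoCopy F (runPainter π l)

/-- Builder has a winning strategy in the deterministic `F`-avoidance game with `r` colors
and tree size restriction `k`. -/
def BuilderWinsTree {α : Type} (F : SimpleGraph α) (r k : ℕ) : Prop :=
  ∃ a : ℕ, ∀ π : PainterStrategy (Fin a) r, ∃ l : List (Sym2 (Fin a)),
    ValidEdgeSeq l ∧ (∀ i : ℕ, TreeSizeLE (boardOf (l.take i)) k) ∧
    HasMonoCopy F (runPainter π l)

/-- The Painter strategy `π` on `a` vertices never creates a monochromatic copy of `F`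
against any Builder play obeying the tree size restriction `k`. -/
def PainterAvoidsTree {α : Type} (F : SimpleGraph α) (r k a : ℕ)
    (π : PainterStrategy (Fin a) r) : Prop :=
  ∀ l : List (Sym2 (Fin a)), ValidEdgeSeq l →
    (∀ i : ℕ, TreeSizeLE (boardOf (l.take i)) k) →
    ¬ HasMonoCopy F (runPainter π l)

/-- Painter has a winning strategy in the deterministic `F`-avoidance game with `r` colors
and tree size restriction `k`. -/
def PainterWinsTree {α : Type} (F : SimpleGraph α) (r k : ℕ) : Prop :=
  ∀ a : ℕ, ∃ π : PainterStrategy (Fin a) r, PainterAvoidsTree F r k a π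

/-- A sequence of `N` distinct non-loop edges on `n` vertices. -/
def ValidSeqFun {n N : ℕ} (f : Fin N → Sym2 (Fin n)) : Prop :=
  Function.Injective f ∧ ∀ i, ¬ (f i).IsDiag

/-- The probability (with respect to the uniformly random order in which the `N` distinct
edges of the random process on `n` vertices appear) of the event `P`. -/
noncomputable def onlineProb (n N : ℕ) (P : (Fin N → Sym2 (Fin n)) → Prop) : ℝ :=
  (Set.ncard {f : Fin N → Sym2 (Fin n) | ValidSeqFun f ∧ P f} : ℝ) /
  (Set.ncard {f : Fin N → Sym2 (Fin n) | ValidSeqFun f} : ℝ)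

/-- Event: playing the online strategy `π` on the random edge sequence `f` produces
a monochromatic copy of `F`. -/
def OnlineMonoCopy {α : Type} (F : SimpleGraph α) {r n N : ℕ}
    (π : PainterStrategy (Fin n) r) (f : Fin N → Sym2 (Fin n)) : Prop :=
  HasMonoCopy F (runPainter π (List.ofFn f))

/-- A Builder strategy tree with `r` colors: at each non-leaf node Builder presents
an edge `e`, and the game continues in the child indexed by the color Painter chooses. -/
inductive BuilderTree (V : Type) (r : ℕ) : Type
  | leaf : BuilderTree V r
  | node (e : Sym2 V) (child : Fin r → BuilderTree V r) : BuilderTree V r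

/-- The strategy tree is proper, relative to the list `used` of edges already on the board:
every presented edge is a non-loop vertex pair that is not yet an edge of the board. -/
def BuilderTree.Proper {V : Type} {r : ℕ} : BuilderTree V r → List (Sym2 V) → Prop
  | .leaf, _ => True
  | .node e child, used => ¬ e.IsDiag ∧ e ∉ used ∧ ∀ c : Fin r, (child c).Proper (e :: used)

/-- The strategy tree is legal for density restriction `d`, relative to the set `cur` of
edges already on the board: the underlying uncolored graph of every node satisfies `m(B) ≤ d`. -/
def BuilderTree.LegalDensity {V : Type} {r : ℕ} (d : ℝ) :
    BuilderTree V r → Set (Sym2 V) → Prop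
  | .leaf, _ => True
  | .node e child, cur =>
      DensityLE (SimpleGraph.fromEdgeSet (insert e cur)) d ∧
      ∀ c : Fin r, (child c).LegalDensity d (insert e cur)

/-- The colored histories (colored boards) corresponding to the nodes at depth `k` of the
strategy tree. -/
def BuilderTree.nodeHistsAt {V : Type} {r : ℕ} :
    BuilderTree V r → ℕ → Set (EdgeHistory V r)
  | _, 0 => {[]}
  | .leaf, _ + 1 => ∅
  | .node e child, k + 1 =>
      ⋃ c : Fin r, (fun h => (e, c) :: h) '' ((child c).nodeHistsAt k)

/-- The colored histories (colored boards) corresponding to the leaves of the strategy tree. -/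
def BuilderTree.leafHists {V : Type} {r : ℕ} : BuilderTree V r → Set (EdgeHistory V r)
  | .leaf => {[]}
  | .node e child => ⋃ c : Fin r, (fun h => (e, c) :: h) '' ((child c).leafHists)

/-- The copies of the colored graph given by the history `B` (on `Fin a`) in the colored
graph given by the history `H` (on `Fin n`): injections preserving all edges together with
their colors. -/
def ColoredCopies {a n r : ℕ} (B : EdgeHistory (Fin a) r) (H : EdgeHistory (Fin n) r) :
    Set (Fin a ↪ Fin n) :=
  {f | ∀ c : Fin r, ∀ u v : Fin a,
    (colorGraph B c).Adj u v → (colorGraph H c).Adj (f u) (f v)}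

/-- The colored history `H` contains a copy (as an edge-colored graph) of some leaf of `T`. -/
def HasLeafCopy {a n r : ℕ} (T : BuilderTree (Fin a) r) (H : EdgeHistory (Fin n) r) : Prop :=
  ∃ B ∈ T.leafHists, (ColoredCopies B H).Nonempty

/-! ### Exchangeable random sets -/

structure Exch {Ω' E : Type} [DecidableEq E] (Ω : Finset Ω') (R : Ω' → Finset E)
    (A : Finset E) (M : ℕ) (act : E → E → Ω' → Ω') : Prop where
  sub : ∀ ω ∈ Ω, R ω ⊆ A
  card : ∀ ω ∈ Ω, (R ω).card = M
  mem : ∀ x ∈ A, ∀ y ∈ A, ∀ ω ∈ Ω, act x y ω ∈ Ω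
  inv : ∀ x y ω, act x y (act x y ω) = ω
  img : ∀ x y ω, R (act x y ω) = (R ω).image (Equiv.swap x y)

section exch
variable {Ω' E : Type} [DecidableEq E] {Ω : Finset Ω'} {R : Ω' → Finset E}
    {A : Finset E} {M : ℕ} {act : E → E → Ω' → Ω'}

theorem Exch.cnt_swap_le (h : Exch Ω R A M act) {S : Finset E} {x y : E}
    (hx : x ∈ A) (hy : y ∈ A) (hxS : x ∉ S) (hyS : y ∉ S) :
    (Ω.filter (fun ω => insert x S ⊆ R ω)).card ≤ (Ω.filter (fun ω => insert y S ⊆ R ω)).card := by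
  apply Finset.card_le_card_of_injOn (act x y)
  · intro ω hω
    simp only [Finset.coe_filter, Set.mem_ofPred_eq] at hω ⊢
    refine ⟨h.mem x hx y hy ω hω.1, ?_⟩
    rw [h.img]
    intro z hz
    rw [Finset.mem_image]
    rcases Finset.mem_insert.1 hz with rfl | hz'
    · exact ⟨x, hω.2 (Finset.mem_insert_self _ _), Equiv.swap_apply_left _ _⟩
    · refine ⟨z, hω.2 (Finset.mem_insert_of_mem hz'), Equiv.swap_apply_of_ne_of_ne ?_ ?_⟩
      · rintro rfl; exact hxS hz'
      · rintro rfl; exact hyS hz'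
  · intro a _ b _ hab
    have := congrArg (act x y) hab
    rwa [h.inv, h.inv] at this

theorem Exch.cnt_step (h : Exch Ω R A M act) {S : Finset E} {x : E} (hS : S ⊆ A)
    (hx : x ∈ A) (hxS : x ∉ S) :
    (A.card - S.card) * (Ω.filter (fun ω => insert x S ⊆ R ω)).card =
      (M - S.card) * (Ω.filter (fun ω => S ⊆ R ω)).card := by
  have h1 : ∑ y ∈ A \ S, (Ω.filter (fun ω => insert y S ⊆ R ω)).card =
      (A.card - S.card) * (Ω.filter (fun ω => insert x S ⊆ R ω)).card := by
    rw [← Finset.card_sdiff_of_subset hS, ← smul_eq_mul, ← Finset.sum_const]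
    apply Finset.sum_congr rfl
    intro y hy
    rw [Finset.mem_sdiff] at hy
    exact le_antisymm (h.cnt_swap_le hy.1 hx hy.2 hxS) (h.cnt_swap_le hx hy.1 hxS hy.2)
  rw [← h1]
  have h2 : ∀ y, (Ω.filter (fun ω => insert y S ⊆ R ω)).card =
      ∑ ω ∈ Ω.filter (fun ω => S ⊆ R ω), if y ∈ R ω then 1 else 0 := by
    intro y
    rw [Finset.card_eq_sum_ones, Finset.sum_filter, Finset.sum_filter]
    apply Finset.sum_congr rfl
    intro ω _
    by_cases hy : y ∈ R ω <;> by_cases hs : S ⊆ R ω <;> simp [Finset.insert_subset_iff, hy, hs]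
  simp_rw [h2]
  rw [Finset.sum_comm, mul_comm, ← smul_eq_mul, ← Finset.sum_const]
  apply Finset.sum_congr rfl
  intro ω hω
  rw [Finset.mem_filter] at hω
  rw [← Finset.sum_filter, ← Finset.card_eq_sum_ones]
  rw [← h.card ω hω.1, ← Finset.card_sdiff_of_subset hω.2]
  congr 1
  ext z
  have : z ∈ R ω → z ∈ A := fun hz => h.sub ω hω.1 hz
  simp only [Finset.mem_filter, Finset.mem_sdiff]
  tauto

theorem Exch.M_le (h : Exch Ω R A M act) (hΩ : Ω.Nonempty) : M ≤ A.card := by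
  obtain ⟨ω, hω⟩ := hΩ
  rw [← h.card ω hω]
  exact Finset.card_le_card (h.sub ω hω)

theorem Exch.cnt_step_le (h : Exch Ω R A M act) {S : Finset E} {x : E} (hS : S ⊆ A)
    (hx : x ∈ A) (hxS : x ∉ S) :
    A.card * (Ω.filter (fun ω => insert x S ⊆ R ω)).card ≤
      M * (Ω.filter (fun ω => S ⊆ R ω)).card := by
  rcases Ω.eq_empty_or_nonempty with rfl | hΩ
  · simp
  have hM := h.M_le hΩ
  have h1 := h.cnt_step hS hx hxS
  set u := (Ω.filter (fun ω => insert x S ⊆ R ω)).card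
  set v := (Ω.filter (fun ω => S ⊆ R ω)).card
  have hlt : S.card < A.card := by
    have : (insert x S).card ≤ A.card :=
      Finset.card_le_card (Finset.insert_subset hx hS)
    rw [Finset.card_insert_of_notMem hxS] at this
    omega
  have hpos : 0 < A.card - S.card := by omega
  refine le_of_mul_le_mul_left (a := A.card - S.card) ?_ hpos
  have h2 : A.card * (M - S.card) ≤ M * (A.card - S.card) := by
    rw [Nat.mul_sub, Nat.mul_sub, mul_comm A.card M]
    have := Nat.mul_le_mul_right S.card hM
    omega
  calc (A.card - S.card) * (A.card * u) = A.card * ((A.card - S.card) * u) := by ring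
    _ = (A.card * (M - S.card)) * v := by rw [h1]; ring
    _ ≤ (M * (A.card - S.card)) * v := Nat.mul_le_mul_right _ h2
    _ = _ := by ring

theorem Exch.cnt_le (h : Exch Ω R A M act) (S : Finset E) (hS : S ⊆ A) :
    A.card ^ S.card * (Ω.filter (fun ω => S ⊆ R ω)).card ≤ M ^ S.card * Ω.card := by
  induction S using Finset.induction_on with
  | empty => simp
  | insert x S hxS ih =>
    have hS' : S ⊆ A := fun z hz => hS (Finset.mem_insert_of_mem hz)
    have h1 := h.cnt_step_le hS' (hS (Finset.mem_insert_self _ _)) hxS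
    have h2 := ih hS'
    rw [Finset.card_insert_of_notMem hxS]
    calc _ = A.card ^ S.card * (A.card * (Ω.filter (fun ω => insert x S ⊆ R ω)).card) := by
            rw [pow_succ]; ring
      _ ≤ A.card ^ S.card * (M * (Ω.filter (fun ω => S ⊆ R ω)).card) := Nat.mul_le_mul_left _ h1
      _ = M * (A.card ^ S.card * (Ω.filter (fun ω => S ⊆ R ω)).card) := by ring
      _ ≤ M * (M ^ S.card * Ω.card) := Nat.mul_le_mul_left _ h2
      _ = _ := by rw [pow_succ]; ring

theorem Exch.cnt_one (h : Exch Ω R A M act) {x : E} (hx : x ∈ A) :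
    A.card * (Ω.filter (fun ω => x ∈ R ω)).card = M * Ω.card := by
  have := h.cnt_step (S := ∅) (x := x) (by simp) hx (by simp)
  simpa [Finset.insert_subset_iff] using this

theorem Exch.cnt_two (h : Exch Ω R A M act) {x y : E} (hx : x ∈ A) (hy : y ∈ A) (hxy : x ≠ y) :
    A.card ^ 2 * (Ω.filter (fun ω => x ∈ R ω ∧ y ∈ R ω)).card ≤ M ^ 2 * Ω.card := by
  have := h.cnt_le {x, y} (by intro z hz; simp at hz; rcases hz with rfl | rfl <;> assumption)
  rw [Finset.card_pair hxy] at this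
  simpa [Finset.insert_subset_iff] using this

/-- Chebyshev. -/
theorem Exch.cheb (h : Exch Ω R A M act) (w : E → ℝ) (hw : ∀ x, 0 ≤ w x) (q : ℝ)
    (hq : q * A.card = M) (hA : 0 < A.card) :
    ((Ω.filter (fun ω => ∑ x ∈ R ω, w x < q * (∑ x ∈ A, w x) / 2)).card : ℝ) *
      ((q * ∑ x ∈ A, w x) ^ 2 / 4) ≤ Ω.card * (q * ∑ x ∈ A, w x ^ 2) := by
  set W := ∑ x ∈ A, w x with hW
  have hA' : (0 : ℝ) < A.card := by exact_mod_cast hA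
  have hq0 : 0 ≤ q := by
    have : q = M / A.card := by field_simp; exact hq
    rw [this]; positivity
  have hW0 : 0 ≤ W := Finset.sum_nonneg fun x _ => hw x
  have p1 : ∀ x ∈ A, ((Ω.filter (fun ω => x ∈ R ω)).card : ℝ) = q * Ω.card := by
    intro x hx
    have := h.cnt_one hx
    have t : (A.card : ℝ) * (Ω.filter (fun ω => x ∈ R ω)).card = M * Ω.card := by exact_mod_cast this
    rw [← hq] at t
    apply mul_left_cancel₀ hA'.ne'
    rw [t]; ring
  have p2 : ∀ x ∈ A, ∀ y ∈ A, x ≠ y →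
      ((Ω.filter (fun ω => x ∈ R ω ∧ y ∈ R ω)).card : ℝ) ≤ q ^ 2 * Ω.card := by
    intro x hx y hy hxy
    have := h.cnt_two hx hy hxy
    have t : (A.card : ℝ) ^ 2 * (Ω.filter (fun ω => x ∈ R ω ∧ y ∈ R ω)).card ≤ M ^ 2 * Ω.card := by
      exact_mod_cast this
    rw [← hq] at t
    apply le_of_mul_le_mul_left _ (pow_pos hA' 2)
    calc _ ≤ _ := t
      _ = _ := by ring
  have hX : ∀ ω ∈ Ω, ∑ x ∈ R ω, w x = ∑ x ∈ A, if x ∈ R ω then w x else 0 := by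
    intro ω hω
    rw [← Finset.sum_filter]
    congr 1
    ext z
    have : z ∈ R ω → z ∈ A := fun hz => h.sub ω hω hz
    simp only [Finset.mem_filter]; tauto
  have e1 : ∑ ω ∈ Ω, ∑ x ∈ R ω, w x = q * W * Ω.card := by
    rw [Finset.sum_congr rfl hX, Finset.sum_comm, hW, Finset.mul_sum, Finset.sum_mul]
    apply Finset.sum_congr rfl
    intro x hx
    rw [← Finset.sum_filter, Finset.sum_const, nsmul_eq_mul, p1 x hx]; ring
  have e2 : ∑ ω ∈ Ω, (∑ x ∈ R ω, w x) ^ 2 ≤ (q * W) ^ 2 * Ω.card + Ω.card * (q * ∑ x ∈ A, w x ^ 2) := by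
    have s1 : ∑ ω ∈ Ω, (∑ x ∈ R ω, w x) ^ 2 =
        ∑ x ∈ A, ∑ y ∈ A, w x * w y * ((Ω.filter (fun ω => x ∈ R ω ∧ y ∈ R ω)).card : ℝ) := by
      have : ∀ ω ∈ Ω, (∑ x ∈ R ω, w x) ^ 2 =
          ∑ x ∈ A, ∑ y ∈ A, if x ∈ R ω ∧ y ∈ R ω then w x * w y else 0 := by
        intro ω hω
        rw [hX ω hω, sq, Finset.sum_mul_sum]
        apply Finset.sum_congr rfl; intro x _
        apply Finset.sum_congr rfl; intro y _
        by_cases h1 : x ∈ R ω <;> by_cases h2 : y ∈ R ω <;> simp [h1, h2]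
      rw [Finset.sum_congr rfl this, Finset.sum_comm]
      apply Finset.sum_congr rfl; intro x _
      rw [Finset.sum_comm]
      apply Finset.sum_congr rfl; intro y _
      rw [← Finset.sum_filter, Finset.sum_const, nsmul_eq_mul]; ring
    rw [s1]
    have s2 : ∀ x ∈ A, ∀ y ∈ A, w x * w y * ((Ω.filter (fun ω => x ∈ R ω ∧ y ∈ R ω)).card : ℝ) ≤
        w x * w y * (q ^ 2 * Ω.card) + if x = y then w x ^ 2 * (q * Ω.card) else 0 := by
      intro x hx y hy
      have hxy0 := mul_nonneg (hw x) (hw y)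
      split_ifs with hxy
      · subst hxy
        have : ((Ω.filter (fun ω => x ∈ R ω ∧ x ∈ R ω)).card : ℝ) = q * Ω.card := by
          rw [← p1 x hx]; simp
        rw [this]
        have : 0 ≤ w x * w x * (q ^ 2 * Ω.card) := by positivity
        nlinarith
      · rw [add_zero]
        exact mul_le_mul_of_nonneg_left (p2 x hx y hy hxy) hxy0
    calc _ ≤ ∑ x ∈ A, ∑ y ∈ A, (w x * w y * (q ^ 2 * Ω.card) +
            if x = y then w x ^ 2 * (q * Ω.card) else 0) :=
          Finset.sum_le_sum fun x hx => Finset.sum_le_sum fun y hy => s2 x hx y hy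
      _ = (q * W) ^ 2 * Ω.card + Ω.card * (q * ∑ x ∈ A, w x ^ 2) := by
          simp_rw [Finset.sum_add_distrib]
          congr 1
          · simp_rw [← Finset.sum_mul, ← Finset.mul_sum, ← Finset.sum_mul]; rw [← hW]; ring
          · rw [Finset.mul_sum, Finset.mul_sum]
            apply Finset.sum_congr rfl; intro x hx
            rw [Finset.sum_ite_eq, if_pos hx]; ring
  have e3 : ∑ ω ∈ Ω, (∑ x ∈ R ω, w x - q * W) ^ 2 ≤ Ω.card * (q * ∑ x ∈ A, w x ^ 2) := by
    have : ∀ ω, (∑ x ∈ R ω, w x - q * W) ^ 2 =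
      (∑ x ∈ R ω, w x) ^ 2 - 2 * (q * W) * (∑ x ∈ R ω, w x) + (q * W) ^ 2 := fun ω => by ring
    simp_rw [this]
    rw [Finset.sum_add_distrib, Finset.sum_sub_distrib, ← Finset.mul_sum, e1, Finset.sum_const,
      nsmul_eq_mul]
    nlinarith
  refine le_trans ?_ e3
  rw [← nsmul_eq_mul, ← Finset.sum_const]
  refine le_trans (Finset.sum_le_sum (g := fun ω => (∑ x ∈ R ω, w x - q * W) ^ 2) ?_) ?_
  · intro ω hω
    rw [Finset.mem_filter] at hω
    have : 0 ≤ q * W := mul_nonneg hq0 hW0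
    nlinarith [hω.2]
  · exact Finset.sum_le_sum_of_subset_of_nonneg (Finset.filter_subset _ _) fun _ _ _ => sq_nonneg _
end exch

/-! ### The concrete random sequence -/

noncomputable def Om (n N : ℕ) : Finset (Fin N → Sym2 (Fin n)) :=
  Finset.univ.filter (fun F => ValidSeqFun F)

noncomputable def Ed (n : ℕ) : Finset (Sym2 (Fin n)) :=
  Finset.univ.filter (fun e => ¬ e.IsDiag)

def swapAct {n N : ℕ} (x y : Sym2 (Fin n)) (F : Fin N → Sym2 (Fin n)) : Fin N → Sym2 (Fin n) :=
  fun i => Equiv.swap x y (F i)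

theorem mem_Om {n N : ℕ} {F : Fin N → Sym2 (Fin n)} : F ∈ Om n N ↔ ValidSeqFun F := by
  simp [Om]

theorem mem_Ed {n : ℕ} {e : Sym2 (Fin n)} : e ∈ Ed n ↔ ¬ e.IsDiag := by
  simp [Ed]

theorem card_Ed (n : ℕ) : (Ed n).card = n.choose 2 := by
  have := Sym2.card_subtype_not_diag (α := Fin n)
  rw [Fintype.card_fin] at this
  rw [← this, Fintype.card_subtype]
  rfl

theorem ofFn_swapAct {n N : ℕ} (x y : Sym2 (Fin n)) (F : Fin N → Sym2 (Fin n)) :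
    List.ofFn (swapAct x y F) = (List.ofFn F).map (Equiv.swap x y) := by
  rw [List.map_ofFn]; rfl

theorem swapAct_inv {n N : ℕ} (x y : Sym2 (Fin n)) (F : Fin N → Sym2 (Fin n)) :
    swapAct x y (swapAct x y F) = F := by
  funext i; simp [swapAct]

theorem swapAct_mem {n N : ℕ} {x y : Sym2 (Fin n)} (hx : x ∈ Ed n) (hy : y ∈ Ed n)
    {F : Fin N → Sym2 (Fin n)} (hF : F ∈ Om n N) : swapAct x y F ∈ Om n N := by
  rw [mem_Om] at *
  rw [mem_Ed] at hx hy
  refine ⟨fun i j h => hF.1 ((Equiv.swap x y).injective h), fun i => ?_⟩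
  show ¬ (Equiv.swap x y (F i)).IsDiag
  rw [Equiv.swap_apply_def]
  split_ifs
  · exact hy
  · exact hx
  · exact hF.2 i

theorem Om_nodup {n N : ℕ} {F : Fin N → Sym2 (Fin n)} (hF : F ∈ Om n N) : (List.ofFn F).Nodup :=
  List.nodup_ofFn.2 (mem_Om.1 hF).1

theorem Om_nd {n N : ℕ} {F : Fin N → Sym2 (Fin n)} (hF : F ∈ Om n N) {e : Sym2 (Fin n)}
    (he : e ∈ List.ofFn F) : e ∈ Ed n := by
  rw [List.mem_ofFn] at he
  obtain ⟨i, rfl⟩ := he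
  exact mem_Ed.2 ((mem_Om.1 hF).2 i)

theorem exch_full (n N : ℕ) :
    Exch (Om n N) (fun F => (List.ofFn F).toFinset) (Ed n) N swapAct where
  sub := fun F hF e he => Om_nd hF (List.mem_toFinset.1 he)
  card := fun F hF => by rw [List.toFinset_card_of_nodup (Om_nodup hF), List.length_ofFn]
  mem := fun x hx y hy F hF => swapAct_mem hx hy hF
  inv := swapAct_inv
  img := fun x y F => by
    ext z; simp only [ofFn_swapAct, List.mem_toFinset, List.mem_map, Finset.mem_image]

theorem exch_cond (n N : ℕ) (t' t : ℕ) (h1 : t' ≤ t) (h2 : t ≤ N) (l : List (Sym2 (Fin n))) :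
    Exch ((Om n N).filter (fun F => (List.ofFn F).take t' = l))
      (fun F => (((List.ofFn F).take t).drop t').toFinset) (Ed n \ l.toFinset) (t - t')
      swapAct where
  sub := by
    intro F hF e he
    rw [Finset.mem_filter] at hF
    obtain ⟨hF, rfl⟩ := hF
    rw [List.mem_toFinset] at he
    have hnd := (List.Nodup.sublist (List.take_sublist t _) (Om_nodup hF))
    rw [← List.take_append_drop t' ((List.ofFn F).take t), List.take_take, min_eq_left h1] at hnd
    rw [Finset.mem_sdiff, List.mem_toFinset]
    refine ⟨Om_nd hF (List.mem_of_mem_take (List.mem_of_mem_drop he)), fun h => ?_⟩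
    exact (List.nodup_append.1 hnd).2.2 _ h _ he rfl
  card := by
    intro F hF
    rw [Finset.mem_filter] at hF
    rw [List.toFinset_card_of_nodup]
    · simp [h2]
    · exact ((Om_nodup hF.1).sublist (List.take_sublist t _)).sublist (List.drop_sublist _ _)
  mem := by
    intro x hx y hy F hF
    rw [Finset.mem_filter] at hF ⊢
    rw [Finset.mem_sdiff, List.mem_toFinset] at hx hy
    refine ⟨swapAct_mem hx.1 hy.1 hF.1, ?_⟩
    rw [ofFn_swapAct, ← List.map_take, hF.2]
    conv_rhs => rw [← List.map_id l]
    apply List.map_congr_left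
    intro z hz
    apply Equiv.swap_apply_of_ne_of_ne
    · rintro rfl; exact hx.2 hz
    · rintro rfl; exact hy.2 hz
  inv := swapAct_inv
  img := by
    intro x y F
    ext z
    simp only [ofFn_swapAct, ← List.map_take, ← List.map_drop, List.mem_toFinset, List.mem_map,
      Finset.mem_image]

/-! ### Painter -/

theorem runAux_spec {V : Type} {r : ℕ} (π : PainterStrategy V r) (l : List (Sym2 V)) :
    ∀ h, ∃ h', runPainterAux π h l = h ++ h' ∧ h'.map Prod.fst = l := by
  induction l with
  | nil => intro h; exact ⟨[], by simp [runPainterAux]⟩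
  | cons e es ih =>
    intro h
    obtain ⟨h', h1, h2⟩ := ih (h ++ [(e, π h e)])
    exact ⟨(e, π h e) :: h', by simp [runPainterAux, h1], by simp [h2]⟩

theorem runAux_append {V : Type} {r : ℕ} (π : PainterStrategy V r) (l1 l2 : List (Sym2 V)) :
    ∀ h, runPainterAux π h (l1 ++ l2) = runPainterAux π (runPainterAux π h l1) l2 := by
  induction l1 with
  | nil => intro h; simp [runPainterAux]
  | cons e es ih => intro h; simp [runPainterAux, ih]

theorem run_append {V : Type} {r : ℕ} (π : PainterStrategy V r) (l1 l2 : List (Sym2 V)) :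
    ∃ h', runPainter π (l1 ++ l2) = runPainter π l1 ++ h' ∧ h'.map Prod.fst = l2 := by
  unfold runPainter
  rw [runAux_append]
  exact runAux_spec _ _ _

theorem run_fst {V : Type} {r : ℕ} (π : PainterStrategy V r) (l : List (Sym2 V)) :
    (runPainter π l).map Prod.fst = l := by
  obtain ⟨h', h1, h2⟩ := runAux_spec π l []
  unfold runPainter
  rw [h1]; simpa using h2

theorem mem_copies {a n r : ℕ} {B : EdgeHistory (Fin a) r} {H : EdgeHistory (Fin n) r}
    {f : Fin a ↪ Fin n} :
    f ∈ ColoredCopies B H ↔ ∀ x ∈ B, ¬ x.1.IsDiag → (x.1.map f, x.2) ∈ H := by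
  constructor
  · rintro h ⟨e, c⟩ hx hd
    induction e using Sym2.ind with
    | _ u v =>
      have := h c u v
      simp only [colorGraph, SimpleGraph.fromEdgeSet_adj, Set.mem_ofPred_eq] at this
      exact (this ⟨hx, by simpa using hd⟩).1
  · intro h c u v huv
    simp only [colorGraph, SimpleGraph.fromEdgeSet_adj, Set.mem_ofPred_eq] at huv ⊢
    exact ⟨h (s(u, v), c) huv.1 (by simpa using huv.2), fun h => huv.2 (f.injective h)⟩

theorem copies_mono {a n r : ℕ} {B : EdgeHistory (Fin a) r} {H H' : EdgeHistory (Fin n) r}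
    (h : ∀ x ∈ H, x ∈ H') : ColoredCopies B H ⊆ ColoredCopies B H' := by
  intro f hf
  rw [mem_copies] at hf ⊢
  exact fun x hx hd => h _ (hf x hx hd)

/-! ### Trees -/

theorem tree_step {V : Type} {r : ℕ} {d : ℝ} (k : ℕ) : ∀ (T : BuilderTree V r) (used : List (Sym2 V)),
    T.Proper used → T.LegalDensity d {e | e ∈ used} → ∀ B ∈ T.nodeHistsAt k,
    (B.map Prod.fst).Nodup ∧ B.length = k ∧ (∀ e ∈ B.map Prod.fst, ¬ e.IsDiag ∧ e ∉ used) ∧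
    (B ∈ T.leafHists ∨ ∃ e, ¬ e.IsDiag ∧ e ∉ used ∧ e ∉ B.map Prod.fst ∧
      DensityLE (SimpleGraph.fromEdgeSet (insert e ({e | e ∈ used} ∪ {e | e ∈ B.map Prod.fst}))) d ∧
      ∀ c, B ++ [(e, c)] ∈ T.nodeHistsAt (k + 1)) := by
  induction k with
  | zero =>
    intro T used hp hl B hB
    cases T with
    | leaf =>
      simp only [BuilderTree.nodeHistsAt, Set.mem_singleton_iff] at hB
      subst hB
      simp [BuilderTree.leafHists]
    | node e child =>
      simp only [BuilderTree.nodeHistsAt, Set.mem_singleton_iff] at hB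
      subst hB
      refine ⟨by simp, by simp, by simp, Or.inr ⟨e, hp.1, hp.2.1, by simp, ?_, ?_⟩⟩
      · have := hl.1
        convert this using 3
        ext; simp
      · intro c
        simp [BuilderTree.nodeHistsAt]
  | succ k ih =>
    intro T used hp hl B hB
    cases T with
    | leaf => simp [BuilderTree.nodeHistsAt] at hB
    | node e child =>
      rw [BuilderTree.nodeHistsAt, Set.mem_iUnion] at hB
      obtain ⟨c, B', hB', rfl⟩ := hB
      have hset : insert e {e | e ∈ used} = {e' | e' ∈ e :: used} := by
        ext; simp
      have hl2 := hl.2 c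
      rw [hset] at hl2
      obtain ⟨i1, i2, i3, i4⟩ := ih (child c) (e :: used) (hp.2.2 c) hl2 B' hB'
      refine ⟨?_, by simp [i2], ?_, ?_⟩
      · simp only [List.map_cons, List.nodup_cons]
        exact ⟨fun h => (i3 e h).2 (by simp), i1⟩
      · intro x hx
        simp only [List.map_cons, List.mem_cons] at hx
        rcases hx with rfl | hx
        · exact ⟨hp.1, hp.2.1⟩
        · exact ⟨(i3 x hx).1, fun h => (i3 x hx).2 (List.mem_cons_of_mem _ h)⟩
      · rcases i4 with h | ⟨e', j1, j0, j2, j3, j4⟩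
        · left
          rw [BuilderTree.leafHists, Set.mem_iUnion]
          exact ⟨c, B', h, rfl⟩
        · right
          have hee : e' ≠ e := by rintro rfl; exact j0 (by simp)
          refine ⟨e', j1, fun h => j0 (List.mem_cons_of_mem _ h), ?_, ?_, ?_⟩
          · simp only [List.map_cons, List.mem_cons, not_or]
            exact ⟨hee, j2⟩
          · convert j3 using 3
            ext; simp; tauto
          · intro c'
            rw [BuilderTree.nodeHistsAt, Set.mem_iUnion]
            exact ⟨c, B' ++ [(e', c')], j4 c', rfl⟩

theorem nodes_finite {V : Type} {r : ℕ} (k : ℕ) : ∀ (T : BuilderTree V r),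
    (T.nodeHistsAt k).Finite := by
  induction k with
  | zero => intro T; cases T <;> simp [BuilderTree.nodeHistsAt]
  | succ k ih =>
    intro T
    cases T with
    | leaf => simp [BuilderTree.nodeHistsAt]
    | node e child =>
      rw [BuilderTree.nodeHistsAt]
      exact Set.finite_iUnion fun c => (ih (child c)).image _

theorem density_use {a : ℕ} {d : ℝ} {S : Finset (Sym2 (Fin a))} {e : Sym2 (Fin a)}
    (hS : ∀ x ∈ S, ¬ x.IsDiag) (he : ¬ e.IsDiag) (heS : e ∉ S)
    (h : DensityLE (SimpleGraph.fromEdgeSet (insert e (↑S : Set (Sym2 (Fin a))))) d)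
    (J : Finset (Fin a)) (hJ : ∀ v ∈ e, v ∈ J) :
    (((S.filter (fun x => ∀ v ∈ x, v ∈ J)).card + 1 : ℕ) : ℝ) ≤ d * J.card := by
  have hne : J.Nonempty := by
    induction e using Sym2.ind with
    | _ u v => exact ⟨u, hJ u (by simp)⟩
  refine le_trans ?_ (h J hne)
  rw [Nat.cast_le]
  unfold edgesWithin
  rw [← Finset.card_insert_of_notMem (a := e) (by simp [heS]), ← Set.ncard_coe_finset]
  apply Set.ncard_le_ncard _ (Set.toFinite _)
  intro x hx
  simp only [Finset.coe_insert, Finset.coe_filter, Set.mem_insert_iff, Set.mem_ofPred_eq] at hx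
  simp only [SimpleGraph.edgeSet_fromEdgeSet, Set.mem_inter_iff, Set.mem_sdiff, Set.mem_insert_iff,
    Set.mem_ofPred_eq, Finset.mem_coe]
  rcases hx with rfl | hx
  · exact ⟨⟨Or.inl rfl, he⟩, hJ⟩
  · exact ⟨⟨Or.inr hx.1, hS x hx.1⟩, hx.2⟩

/-! ### Moments -/

def im {a n : ℕ} (f : Fin a ↪ Fin n) (S : Finset (Sym2 (Fin a))) : Finset (Sym2 (Fin n)) :=
  S.image (Sym2.map f)

theorem map_inj {a n : ℕ} (f : Fin a ↪ Fin n) : Function.Injective (Sym2.map f) :=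
  Sym2.map.injective f.injective

theorem map_nd {a n : ℕ} (f : Fin a ↪ Fin n) {e : Sym2 (Fin a)} (he : ¬ e.IsDiag) :
    ¬ (e.map f).IsDiag := by
  induction e using Sym2.ind with
  | _ u v => simpa using he

theorem card_im {a n : ℕ} (f : Fin a ↪ Fin n) (S : Finset (Sym2 (Fin a))) :
    (im f S).card = S.card := Finset.card_image_of_injective _ (map_inj f)

theorem im_sub {a n : ℕ} (f : Fin a ↪ Fin n) {S : Finset (Sym2 (Fin a))}
    (hS : ∀ x ∈ S, ¬ x.IsDiag) : im f S ⊆ Ed n := by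
  intro x hx
  obtain ⟨y, hy, rfl⟩ := Finset.mem_image.1 hx
  exact mem_Ed.2 (map_nd f (hS y hy))

theorem prob_le {n N : ℕ} {ρ : ℝ} (hρ : (N : ℝ) ≤ ρ * (Ed n).card) (hE : 0 < (Ed n).card)
    (U : Finset (Sym2 (Fin n))) (hU : U ⊆ Ed n) :
    (((Om n N).filter (fun F => U ⊆ (List.ofFn F).toFinset)).card : ℝ) ≤
      ρ ^ U.card * (Om n N).card := by
  have h := (exch_full n N).cnt_le U hU
  have h' : ((Ed n).card : ℝ) ^ U.card *
      ((Om n N).filter (fun F => U ⊆ (List.ofFn F).toFinset)).card ≤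
      (N : ℝ) ^ U.card * (Om n N).card := by exact_mod_cast h
  have hE' : (0 : ℝ) < (Ed n).card := by exact_mod_cast hE
  apply le_of_mul_le_mul_left _ (pow_pos hE' U.card)
  calc _ ≤ _ := h'
    _ ≤ (ρ * (Ed n).card) ^ U.card * (Om n N).card := by gcongr
    _ = _ := by rw [mul_pow]; ring

theorem card_emb_le (a n : ℕ) : Fintype.card (Fin a ↪ Fin n) ≤ n ^ a := by
  rw [Fintype.card_embedding_eq, Fintype.card_fin, Fintype.card_fin]
  exact Nat.descFactorial_le_pow _ _

theorem first_moment {a n N : ℕ} {ρ : ℝ} (hρ : (N : ℝ) ≤ ρ * (Ed n).card) (hE : 0 < (Ed n).card)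
    (hρ0 : 0 ≤ ρ) (S : Finset (Sym2 (Fin a))) (hS : ∀ x ∈ S, ¬ x.IsDiag) :
    ∑ F ∈ Om n N, ((Finset.univ.filter
      (fun f : Fin a ↪ Fin n => im f S ⊆ (List.ofFn F).toFinset)).card : ℝ) ≤
      (n : ℝ) ^ a * ρ ^ S.card * (Om n N).card := by
  have : ∀ F : Fin N → Sym2 (Fin n), ((Finset.univ.filter
      (fun f : Fin a ↪ Fin n => im f S ⊆ (List.ofFn F).toFinset)).card : ℝ) =
      ∑ f : Fin a ↪ Fin n, if im f S ⊆ (List.ofFn F).toFinset then 1 else 0 := by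
    intro F; rw [Finset.sum_boole]
  simp_rw [this]
  rw [Finset.sum_comm]
  simp_rw [Finset.sum_boole]
  calc _ ≤ ∑ f : Fin a ↪ Fin n, ρ ^ S.card * (Om n N).card := by
        apply Finset.sum_le_sum
        intro f _
        have := prob_le hρ hE (im f S) (im_sub f hS)
        rwa [card_im] at this
    _ = (Fintype.card (Fin a ↪ Fin n) : ℝ) * (ρ ^ S.card * (Om n N).card) := by
        rw [Finset.sum_const, nsmul_eq_mul]; rfl
    _ ≤ (n : ℝ) ^ a * (ρ ^ S.card * (Om n N).card) := by
        gcongr; exact_mod_cast card_emb_le a n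
    _ = _ := by ring

noncomputable def Jof {a n : ℕ} (p : (Fin a ↪ Fin n) × (Fin a ↪ Fin n)) : Finset (Fin a) :=
  Finset.univ.filter (fun v => ∃ u, p.2 u = p.1 v)

theorem card_Jof {a n : ℕ} (J : Finset (Fin a)) :
    (Finset.univ.filter (fun p : (Fin a ↪ Fin n) × (Fin a ↪ Fin n) => Jof p = J)).card * n ^ J.card ≤
      a ^ a * n ^ (2 * a) := by
  have key : (Finset.univ.filter
      (fun p : (Fin a ↪ Fin n) × (Fin a ↪ Fin n) => Jof p = J)).card ≤
      Fintype.card ((Fin a → Fin n) × (Fin a → Fin a) × ({v // v ∉ J} → Fin n)) := by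
    rw [← Finset.card_univ]
    apply Finset.card_le_card_of_injOn (fun p : (Fin a ↪ Fin n) × (Fin a ↪ Fin n) => ((p.2 : Fin a → Fin n),
      fun v => if h : ∃ u, p.2 u = p.1 v then h.choose else v, fun v => p.1 v.1))
    · intro p _; simp
    · rintro ⟨f, g⟩ hp ⟨f', g'⟩ hp' h
      simp only [Finset.coe_filter, Finset.mem_univ, true_and, Set.mem_ofPred_eq] at hp hp'
      simp only [Prod.mk.injEq] at h
      obtain ⟨h1, h2, h3⟩ := h
      have hg : g = g' := DFunLike.coe_injective h1
      subst hg
      have hf : f = f' := by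
        ext v
        congr 1
        by_cases hv : v ∈ J
        · have e1 : ∃ u, g u = f v := by
            rw [← hp] at hv; simpa [Jof] using hv
          have e2 : ∃ u, g u = f' v := by
            rw [← hp'] at hv; simpa [Jof] using hv
          have := congrFun h2 v
          simp only [dif_pos e1, dif_pos e2] at this
          rw [← e1.choose_spec, ← e2.choose_spec, this]
        · exact congrFun h3 ⟨v, hv⟩
      rw [hf]
  have hJ : J.card ≤ a := by simpa using Finset.card_le_univ J
  have hc : Fintype.card ((Fin a → Fin n) × (Fin a → Fin a) × ({v // v ∉ J} → Fin n)) =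
      n ^ a * (a ^ a * n ^ (a - J.card)) := by
    simp [Fintype.card_subtype_compl]
  rw [hc] at key
  calc _ ≤ n ^ a * (a ^ a * n ^ (a - J.card)) * n ^ J.card := Nat.mul_le_mul_right _ key
    _ = a ^ a * (n ^ a * (n ^ (a - J.card) * n ^ J.card)) := by ring
    _ = _ := by rw [← pow_add, Nat.sub_add_cancel hJ, two_mul, pow_add]

theorem sum_Jof (a n : ℕ) :
    ∑ p : (Fin a ↪ Fin n) × (Fin a ↪ Fin n), n ^ (Jof p).card ≤ 2 ^ a * (a ^ a * n ^ (2 * a)) := by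
  rw [← Finset.sum_fiberwise_of_maps_to (t := (Finset.univ : Finset (Finset (Fin a)))) (g := Jof)
    (fun _ _ => Finset.mem_univ _)]
  calc _ ≤ ∑ J : Finset (Fin a), a ^ a * n ^ (2 * a) := by
        apply Finset.sum_le_sum
        intro J _
        refine le_trans (le_of_eq ?_) (card_Jof J)
        rw [← smul_eq_mul, ← Finset.sum_const]
        apply Finset.sum_congr rfl
        intro p hp
        rw [(Finset.mem_filter.1 hp).2]
    _ = _ := by simp

theorem union_pow {a n : ℕ} {ρ : ℝ} (h0 : 0 ≤ ρ) (h1 : ρ ≤ 1) (S : Finset (Sym2 (Fin a)))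
    (p : (Fin a ↪ Fin n) × (Fin a ↪ Fin n)) :
    ρ ^ (im p.1 S ∪ im p.2 S).card * ρ ^ (S.filter (fun x => ∀ v ∈ x, v ∈ Jof p)).card ≤
      ρ ^ (2 * S.card) := by
  rw [← pow_add]
  apply pow_le_pow_of_le_one h0 h1
  have hu := Finset.card_union_add_card_inter (im p.1 S) (im p.2 S)
  rw [card_im, card_im] at hu
  have : (im p.1 S ∩ im p.2 S).card ≤ (S.filter (fun x => ∀ v ∈ x, v ∈ Jof p)).card := by
    rw [← card_im p.1 (S.filter _)]
    apply Finset.card_le_card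
    intro z hz
    rw [Finset.mem_inter] at hz
    obtain ⟨x, hx, rfl⟩ := Finset.mem_image.1 hz.1
    obtain ⟨y, hy, hxy⟩ := Finset.mem_image.1 hz.2
    apply Finset.mem_image_of_mem
    rw [Finset.mem_filter]
    refine ⟨hx, fun v hv => ?_⟩
    have : p.1 v ∈ Sym2.map p.2 y := by
      rw [hxy]; exact Sym2.mem_map.2 ⟨v, hv, rfl⟩
    obtain ⟨u, _, hu⟩ := Sym2.mem_map.1 this
    simp only [Jof, Finset.mem_filter, Finset.mem_univ, true_and]
    exact ⟨u, hu⟩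
  omega

theorem second_moment {a n N : ℕ} {ρ ω : ℝ} (hρ : (N : ℝ) ≤ ρ * (Ed n).card)
    (hE : 0 < (Ed n).card) (hρ0 : 0 < ρ) (hρ1 : ρ ≤ 1)
    (S : Finset (Sym2 (Fin a))) (hS : ∀ x ∈ S, ¬ x.IsDiag) (e : Sym2 (Fin a))
    (hω : ∀ J : Finset (Fin a), (∀ v ∈ e, v ∈ J) →
      ω ≤ (n : ℝ) ^ J.card * ρ ^ ((S.filter (fun x => ∀ v ∈ x, v ∈ J)).card + 1)) :
    ω * ∑ F ∈ Om n N, ((Finset.univ.filter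
      (fun p : (Fin a ↪ Fin n) × (Fin a ↪ Fin n) => e.map p.1 = e.map p.2 ∧
        im p.1 S ⊆ (List.ofFn F).toFinset ∧ im p.2 S ⊆ (List.ofFn F).toFinset)).card : ℝ) ≤
      2 ^ a * (a ^ a * (n : ℝ) ^ (2 * a)) * ρ ^ (2 * S.card + 1) * (Om n N).card := by
  have h1 : ∀ F : Fin N → Sym2 (Fin n), ((Finset.univ.filter
      (fun p : (Fin a ↪ Fin n) × (Fin a ↪ Fin n) => e.map p.1 = e.map p.2 ∧
        im p.1 S ⊆ (List.ofFn F).toFinset ∧ im p.2 S ⊆ (List.ofFn F).toFinset)).card : ℝ) =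
      ∑ p ∈ Finset.univ.filter (fun p : (Fin a ↪ Fin n) × (Fin a ↪ Fin n) =>
        e.map p.1 = e.map p.2),
        if im p.1 S ∪ im p.2 S ⊆ (List.ofFn F).toFinset then (1 : ℝ) else 0 := by
    intro F
    rw [Finset.sum_boole, Finset.filter_filter]
    simp only [Finset.union_subset_iff]
  simp_rw [h1]
  rw [Finset.sum_comm, Finset.mul_sum]
  simp_rw [Finset.sum_boole]
  have h2 : ∀ p ∈ Finset.univ.filter (fun p : (Fin a ↪ Fin n) × (Fin a ↪ Fin n) =>
      e.map p.1 = e.map p.2),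
      ω * (((Om n N).filter (fun F => im p.1 S ∪ im p.2 S ⊆ (List.ofFn F).toFinset)).card : ℝ) ≤
      (n : ℝ) ^ (Jof p).card * (ρ ^ (2 * S.card + 1) * (Om n N).card) := by
    intro p hp
    have hp' := (Finset.mem_filter.1 hp).2
    have hJ : ∀ v ∈ e, v ∈ Jof p := by
      intro v hv
      have : p.1 v ∈ Sym2.map p.2 e := by
        rw [← hp']; exact Sym2.mem_map.2 ⟨v, hv, rfl⟩
      obtain ⟨u, _, hu⟩ := Sym2.mem_map.1 this
      simp only [Jof, Finset.mem_filter, Finset.mem_univ, true_and]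
      exact ⟨u, hu⟩
    have i1 := hω _ hJ
    have i2 := prob_le hρ hE (im p.1 S ∪ im p.2 S)
      (Finset.union_subset (im_sub _ hS) (im_sub _ hS))
    have i3 := union_pow hρ0.le hρ1 S p
    set eJ := (S.filter (fun x => ∀ v ∈ x, v ∈ Jof p)).card
    calc _ ≤ ((n : ℝ) ^ (Jof p).card * ρ ^ (eJ + 1)) *
          (ρ ^ (im p.1 S ∪ im p.2 S).card * (Om n N).card) := by gcongr
      _ = (n : ℝ) ^ (Jof p).card * ρ * (Om n N).card *
          (ρ ^ (im p.1 S ∪ im p.2 S).card * ρ ^ eJ) := by ring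
      _ ≤ (n : ℝ) ^ (Jof p).card * ρ * (Om n N).card * ρ ^ (2 * S.card) := by gcongr
      _ = _ := by ring
  calc _ ≤ _ := Finset.sum_le_sum h2
    _ ≤ ∑ p : (Fin a ↪ Fin n) × (Fin a ↪ Fin n),
        (n : ℝ) ^ (Jof p).card * (ρ ^ (2 * S.card + 1) * (Om n N).card) := by
      apply Finset.sum_le_sum_of_subset_of_nonneg (Finset.filter_subset _ _)
      intro _ _ _; positivity
    _ = (∑ p : (Fin a ↪ Fin n) × (Fin a ↪ Fin n), (n : ℝ) ^ (Jof p).card) *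
        (ρ ^ (2 * S.card + 1) * (Om n N).card) := by rw [Finset.sum_mul]
    _ ≤ (2 ^ a * (a ^ a * (n : ℝ) ^ (2 * a))) * (ρ ^ (2 * S.card + 1) * (Om n N).card) := by
      gcongr
      exact_mod_cast sum_Jof a n
    _ = _ := by ring

/-! ### The step -/

theorem markov {Ω' : Type} (Ω : Finset Ω') (Y : Ω' → ℝ) (hY : ∀ ω, 0 ≤ Y ω) (b lam : ℝ)
    (hb : ∑ ω ∈ Ω, Y ω ≤ b) :
    ((Ω.filter (fun ω => lam < Y ω)).card : ℝ) * lam ≤ b := by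
  refine le_trans ?_ hb
  rw [← nsmul_eq_mul, ← Finset.sum_const]
  refine le_trans (Finset.sum_le_sum (g := Y) ?_) ?_
  · intro ω hω; exact (Finset.mem_filter.1 hω).2.le
  · exact Finset.sum_le_sum_of_subset_of_nonneg (Finset.filter_subset _ _) fun _ _ _ => hY _

theorem fiber_le {Ω' L : Type} [DecidableEq L] (Ω T : Finset Ω') (hT : T ⊆ Ω) (pre : Ω' → L)
    (ε : ℝ) (h : ∀ l, ((T.filter (fun ω => pre ω = l)).card : ℝ) ≤
      ε * (Ω.filter (fun ω => pre ω = l)).card) :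
    (T.card : ℝ) ≤ ε * Ω.card := by
  rw [Finset.card_eq_sum_card_fiberwise (f := pre) (t := Ω.image pre) (s := T)
    (fun x hx => Finset.mem_coe.2 (Finset.mem_image_of_mem _ (hT hx))),
    Finset.card_eq_sum_card_fiberwise (f := pre) (t := Ω.image pre) (s := Ω)
    (fun x hx => Finset.mem_coe.2 (Finset.mem_image_of_mem _ hx))]
  push_cast
  rw [Finset.mul_sum]
  exact Finset.sum_le_sum fun l _ => h l

noncomputable def Cop {a n r : ℕ} (B : EdgeHistory (Fin a) r) (π : PainterStrategy (Fin n) r)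
    (l : List (Sym2 (Fin n))) : Finset (Fin a ↪ Fin n) :=
  Finset.univ.filter (fun f => f ∈ ColoredCopies B (runPainter π l))

theorem mem_Cop {a n r : ℕ} {B : EdgeHistory (Fin a) r} {π : PainterStrategy (Fin n) r}
    {l : List (Sym2 (Fin n))} {f : Fin a ↪ Fin n} :
    f ∈ Cop B π l ↔ f ∈ ColoredCopies B (runPainter π l) := by simp [Cop]

theorem card_Cop {a n r : ℕ} (B : EdgeHistory (Fin a) r) (π : PainterStrategy (Fin n) r)
    (l : List (Sym2 (Fin n))) :
    (Cop B π l).card = (ColoredCopies B (runPainter π l)).ncard := by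
  rw [← Set.ncard_coe_finset]
  congr 1
  ext f; simp [mem_Cop]

noncomputable def wt {a n r : ℕ} (B : EdgeHistory (Fin a) r) (e : Sym2 (Fin a))
    (π : PainterStrategy (Fin n) r) (l : List (Sym2 (Fin n))) (x : Sym2 (Fin n)) : ℝ :=
  (((Cop B π l).filter (fun f : Fin a ↪ Fin n => e.map f = x)).card : ℝ)

theorem sum_wt {a n r : ℕ} (B : EdgeHistory (Fin a) r) (e : Sym2 (Fin a))
    (π : PainterStrategy (Fin n) r) (l : List (Sym2 (Fin n))) (A : Finset (Sym2 (Fin n))) :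
    ∑ x ∈ A, wt B e π l x = (((Cop B π l).filter (fun f : Fin a ↪ Fin n => e.map f ∈ A)).card : ℝ) := by
  unfold wt
  rw [Finset.card_eq_sum_card_fiberwise (f := fun f : Fin a ↪ Fin n => e.map f) (t := A)
    (s := (Cop B π l).filter (fun f : Fin a ↪ Fin n => e.map f ∈ A))]
  · push_cast
    apply Finset.sum_congr rfl
    intro x hx
    congr 2
    ext f
    simp only [Finset.mem_filter]
    constructor
    · rintro ⟨h1, rfl⟩; exact ⟨⟨h1, hx⟩, rfl⟩
    · rintro ⟨⟨h1, _⟩, h2⟩; exact ⟨h1, h2⟩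
  · intro f hf; exact (Finset.mem_filter.1 hf).2

theorem sum_wt_sq {a n r : ℕ} (B : EdgeHistory (Fin a) r) (e : Sym2 (Fin a))
    (π : PainterStrategy (Fin n) r) (l : List (Sym2 (Fin n))) (A : Finset (Sym2 (Fin n))) :
    ∑ x ∈ A, wt B e π l x ^ 2 ≤ ((Finset.univ.filter
      (fun p : (Fin a ↪ Fin n) × (Fin a ↪ Fin n) => e.map p.1 = e.map p.2 ∧
        p.1 ∈ Cop B π l ∧ p.2 ∈ Cop B π l)).card : ℝ) := by
  have : ∀ x, wt B e π l x ^ 2 = (((Cop B π l).filter (fun f : Fin a ↪ Fin n => e.map f = x) ×ˢ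
      (Cop B π l).filter (fun f : Fin a ↪ Fin n => e.map f = x)).card : ℝ) := by
    intro x; unfold wt; rw [Finset.card_product, sq]; push_cast; rfl
  simp_rw [this]
  rw [← Nat.cast_sum, ← Finset.card_biUnion, Nat.cast_le]
  · apply Finset.card_le_card
    intro p hp
    simp only [Finset.mem_biUnion, Finset.mem_product, Finset.mem_filter] at hp
    obtain ⟨x, _, ⟨h1, h2⟩, h3, h4⟩ := hp
    simp only [Finset.mem_filter, Finset.mem_univ, true_and]
    exact ⟨h2.trans h4.symm, h1, h3⟩
  · intro x _ y _ hxy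
    rw [Function.onFun, Finset.disjoint_left]
    intro p hp hp'
    simp only [Finset.mem_product, Finset.mem_filter] at hp hp'
    exact hxy (hp.1.2.symm.trans hp'.1.2)

theorem Cop_im {a n r : ℕ} {B : EdgeHistory (Fin a) r} {π : PainterStrategy (Fin n) r}
    {l : List (Sym2 (Fin n))} (hB : ∀ x ∈ B.map Prod.fst, ¬ x.IsDiag) {f : Fin a ↪ Fin n}
    (hf : f ∈ Cop B π l) : im f (B.map Prod.fst).toFinset ⊆ l.toFinset := by
  intro z hz
  obtain ⟨x, hx, rfl⟩ := Finset.mem_image.1 hz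
  rw [List.mem_toFinset] at hx
  have hx' := hB x hx
  obtain ⟨y, hy, rfl⟩ := List.mem_map.1 hx
  rw [mem_Cop, mem_copies] at hf
  have := hf y hy hx'
  rw [List.mem_toFinset, ← run_fst π l]
  exact List.mem_map.2 ⟨_, this, rfl⟩

theorem step_cond {a n N r : ℕ} (B : EdgeHistory (Fin a) r) (e : Sym2 (Fin a))
    (π : PainterStrategy (Fin n) r) (t' t : ℕ) (h1 : t' < t) (h2 : t ≤ N)
    (κ ρ c θ D : ℝ) (hκ : 0 < κ) (hρ0 : 0 < ρ) (hc : 0 < c) (hD : 0 < D) (hθ : 0 < θ)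
    (ht : κ * ρ * (Ed n).card ≤ ((t - t' : ℕ) : ℝ)) :
    (((Om n N).filter (fun F =>
      c / 2 * D ≤ ∑ x ∈ Ed n \ ((List.ofFn F).take t').toFinset,
        wt B e π ((List.ofFn F).take t') x ∧
      ∑ x ∈ Ed n \ ((List.ofFn F).take t').toFinset,
        wt B e π ((List.ofFn F).take t') x ^ 2 ≤ θ * D ^ 2 * ρ ∧
      ∑ x ∈ (((List.ofFn F).take t).drop t').toFinset,
        wt B e π ((List.ofFn F).take t') x < κ * c / 4 * D * ρ)).card : ℝ) ≤
      16 * θ / (κ * c ^ 2) * (Om n N).card := by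
  apply fiber_le _ _ (Finset.filter_subset _ _) (fun F => (List.ofFn F).take t')
  intro l
  have hexch := exch_cond n N t' t h1.le h2 l
  set Ω := (Om n N).filter (fun F => (List.ofFn F).take t' = l) with hΩ
  rcases Ω.eq_empty_or_nonempty with h0 | hne
  · rw [Finset.filter_comm, ← hΩ, h0]; simp
  rw [Finset.filter_comm, ← hΩ]
  have hA := hexch.M_le hne
  set A := Ed n \ l.toFinset with hAdef
  have hApos : 0 < A.card := by omega
  have hA' : (0 : ℝ) < A.card := by exact_mod_cast hApos
  set W := ∑ x ∈ A, wt B e π l x with hW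
  set Q := ∑ x ∈ A, wt B e π l x ^ 2 with hQ
  by_cases hg : c / 2 * D ≤ W ∧ Q ≤ θ * D ^ 2 * ρ
  swap
  · have : Ω.filter (fun F =>
      c / 2 * D ≤ ∑ x ∈ Ed n \ ((List.ofFn F).take t').toFinset,
        wt B e π ((List.ofFn F).take t') x ∧
      ∑ x ∈ Ed n \ ((List.ofFn F).take t').toFinset,
        wt B e π ((List.ofFn F).take t') x ^ 2 ≤ θ * D ^ 2 * ρ ∧
      ∑ x ∈ (((List.ofFn F).take t).drop t').toFinset,
        wt B e π ((List.ofFn F).take t') x < κ * c / 4 * D * ρ) = ∅ := by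
      apply Finset.filter_eq_empty_iff.2
      intro F hF h
      have hl := (Finset.mem_filter.1 hF).2
      rw [hl] at h
      exact hg ⟨h.1, h.2.1⟩
    rw [this]
    simp only [Finset.card_empty, Nat.cast_zero]
    positivity
  obtain ⟨g1, g2⟩ := hg
  set q : ℝ := ((t - t' : ℕ) : ℝ) / A.card with hq
  have hqA : q * A.card = ((t - t' : ℕ) : ℝ) := by rw [hq]; field_simp
  have hqlow : κ * ρ ≤ q := by
    rw [hq, le_div_iff₀ hA']
    refine le_trans ?_ ht
    have : (A.card : ℝ) ≤ (Ed n).card := by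
      exact_mod_cast Finset.card_le_card Finset.sdiff_subset
    gcongr
  have hq0 : 0 < q := lt_of_lt_of_le (by positivity) hqlow
  have hW0 : 0 < W := lt_of_lt_of_le (by positivity) g1
  have hch := hexch.cheb (wt B e π l) (fun x => by unfold wt; positivity) q hqA hApos
  rw [← hW, ← hQ] at hch
  have hsub : ((Ω.filter (fun F =>
      c / 2 * D ≤ ∑ x ∈ Ed n \ ((List.ofFn F).take t').toFinset,
        wt B e π ((List.ofFn F).take t') x ∧
      ∑ x ∈ Ed n \ ((List.ofFn F).take t').toFinset,
        wt B e π ((List.ofFn F).take t') x ^ 2 ≤ θ * D ^ 2 * ρ ∧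
      ∑ x ∈ (((List.ofFn F).take t).drop t').toFinset,
        wt B e π ((List.ofFn F).take t') x < κ * c / 4 * D * ρ)).card : ℝ) ≤
      (Ω.filter (fun F => ∑ x ∈ (((List.ofFn F).take t).drop t').toFinset,
        wt B e π l x < q * W / 2)).card := by
    rw [Nat.cast_le]
    apply Finset.card_le_card
    intro F hF
    rw [Finset.mem_filter] at hF ⊢
    have hl := (Finset.mem_filter.1 hF.1).2
    refine ⟨hF.1, ?_⟩
    have := hF.2.2.2
    rw [hl] at this
    refine lt_of_lt_of_le this ?_
    calc κ * c / 4 * D * ρ = (κ * ρ) * (c / 2 * D) / 2 := by ring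
      _ ≤ q * W / 2 := by gcongr
  refine le_trans hsub ?_
  set K : ℝ := ((Ω.filter (fun F => ∑ x ∈ (((List.ofFn F).take t).drop t').toFinset,
        wt B e π l x < q * W / 2)).card : ℝ) with hK
  have hK0 : 0 ≤ K := by rw [hK]; positivity
  -- K * (qW)^2/4 ≤ |Ω| q Q
  have s1 : K * (q * W ^ 2) ≤ 4 * Ω.card * Q := by
    have : q * (K * (q * W ^ 2)) ≤ q * (4 * Ω.card * Q) := by nlinarith
    exact le_of_mul_le_mul_left this hq0
  have s2 : K * ((κ * ρ) * (c / 2 * D) ^ 2) ≤ 4 * Ω.card * (θ * D ^ 2 * ρ) := by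
    calc _ ≤ K * (q * W ^ 2) := by gcongr
      _ ≤ _ := s1
      _ ≤ _ := by gcongr
  rw [div_mul_eq_mul_div, le_div_iff₀ (by positivity)]
  have hpos : 0 < ρ * D ^ 2 := by positivity
  apply le_of_mul_le_mul_left _ hpos
  nlinarith

theorem step_bound {a n N r : ℕ} (B : EdgeHistory (Fin a) r) (e : Sym2 (Fin a))
    (hB : ∀ x ∈ B.map Prod.fst, ¬ x.IsDiag) (hBn : (B.map Prod.fst).Nodup)
    (he : ¬ e.IsDiag) (heB : e ∉ B.map Prod.fst)
    (π : PainterStrategy (Fin n) r) (t' t : ℕ) (h1 : t' < t) (h2 : t ≤ N)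
    (κ ρ c θ ω : ℝ) (hκ : 0 < κ) (hρ0 : 0 < ρ) (hρ1 : ρ ≤ 1) (hc : 0 < c) (hθ : 0 < θ)
    (hω0 : 0 < ω) (hn : 0 < n)
    (hρ : (N : ℝ) ≤ ρ * (Ed n).card) (hE : 0 < (Ed n).card)
    (ht : κ * ρ * (Ed n).card ≤ ((t - t' : ℕ) : ℝ))
    (hω : ∀ J : Finset (Fin a), (∀ v ∈ e, v ∈ J) →
      ω ≤ (n : ℝ) ^ J.card *
        ρ ^ (((B.map Prod.fst).toFinset.filter (fun x => ∀ v ∈ x, v ∈ J)).card + 1)) :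
    (((Om n N).filter (fun F =>
      c * ((n : ℝ) ^ a * ρ ^ B.length) ≤ (Cop B π ((List.ofFn F).take t')).card ∧
      ∑ x ∈ (((List.ofFn F).take t).drop t').toFinset,
        wt B e π ((List.ofFn F).take t') x <
          κ * c / 4 * ((n : ℝ) ^ a * ρ ^ B.length) * ρ)).card : ℝ) ≤
      (2 * ρ / c + 2 ^ a * a ^ a / (ω * θ) + 16 * θ / (κ * c ^ 2)) * (Om n N).card := by
  set D : ℝ := (n : ℝ) ^ a * ρ ^ B.length with hD
  have hn' : (0 : ℝ) < n := by exact_mod_cast hn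
  have hD0 : 0 < D := by positivity
  set S := (B.map Prod.fst).toFinset with hS
  have hSc : S.card = B.length := by
    rw [hS, List.toFinset_card_of_nodup hBn, List.length_map]
  have hSd : ∀ x ∈ S, ¬ x.IsDiag := fun x hx => hB x (List.mem_toFinset.1 hx)
  have heS : e ∉ S := fun h => heB (List.mem_toFinset.1 h)
  have fm := first_moment hρ hE hρ0.le (insert e S) (a := a) (by
    intro x hx
    rcases Finset.mem_insert.1 hx with rfl | hx
    · exact he
    · exact hSd x hx)
  have sm := second_moment hρ hE hρ0 hρ1 S hSd e hω
  have m1 := markov (Om n N) _ (fun F => Nat.cast_nonneg _) _ (c / 2 * D) fm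
  have sm' := (le_div_iff₀' hω0).2 sm
  have m2 := markov (Om n N) _ (fun F => Nat.cast_nonneg _) _ (θ * D ^ 2 * ρ) sm'
  have m3 := step_cond (N := N) B e π t' t h1 h2 κ ρ c θ D hκ hρ0 hc hD0 hθ ht
  have b1 : (((Om n N).filter (fun F => c / 2 * D < ((Finset.univ.filter
      (fun f : Fin a ↪ Fin n => im f (insert e S) ⊆ (List.ofFn F).toFinset)).card : ℝ))).card : ℝ) ≤
      2 * ρ / c * (Om n N).card := by
    apply le_of_mul_le_mul_right _ (show 0 < c / 2 * D by positivity)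
    refine le_trans m1 (le_of_eq ?_)
    rw [Finset.card_insert_of_notMem heS, hSc, hD]
    field_simp
    ring
  have b2 : (((Om n N).filter (fun F => θ * D ^ 2 * ρ < ((Finset.univ.filter
      (fun p : (Fin a ↪ Fin n) × (Fin a ↪ Fin n) => e.map p.1 = e.map p.2 ∧
        im p.1 S ⊆ (List.ofFn F).toFinset ∧ im p.2 S ⊆ (List.ofFn F).toFinset)).card : ℝ))).card : ℝ)
      ≤ 2 ^ a * a ^ a / (ω * θ) * (Om n N).card := by
    apply le_of_mul_le_mul_right _ (show 0 < θ * D ^ 2 * ρ by positivity)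
    refine le_trans m2 (le_of_eq ?_)
    rw [hSc, hD]
    field_simp
    ring
  rw [add_mul, add_mul]
  refine le_trans ?_ (add_le_add (add_le_add b1 b2) m3)
  rw [← Nat.cast_add, ← Nat.cast_add, Nat.cast_le]
  refine le_trans (Finset.card_le_card ?_) (le_trans (Finset.card_union_le _ _)
    (Nat.add_le_add_right (Finset.card_union_le _ _) _))
  intro F hF
  rw [Finset.mem_filter] at hF
  obtain ⟨hFO, k1, k2⟩ := hF
  simp only [Finset.mem_union, Finset.mem_filter, hFO, true_and]
  by_contra hcon
  push Not at hcon
  obtain ⟨⟨n1, n2⟩, n3⟩ := hcon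
  set l := (List.ofFn F).take t' with hl
  have hlF : l.toFinset ⊆ (List.ofFn F).toFinset := by
    intro x hx
    rw [List.mem_toFinset] at hx ⊢
    exact List.mem_of_mem_take hx
  refine absurd k2 (not_lt.2 (n3 ?_ ?_))
  · rw [sum_wt]
    have hsplit := Finset.card_filter_add_card_filter_not (s := Cop B π l)
      (fun f : Fin a ↪ Fin n => e.map f ∈ Ed n \ l.toFinset)
    have hz : ((Cop B π l).filter (fun f : Fin a ↪ Fin n => ¬ e.map f ∈ Ed n \ l.toFinset)).card ≤
        (Finset.univ.filter
      (fun f : Fin a ↪ Fin n => im f (insert e S) ⊆ (List.ofFn F).toFinset)).card := by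
      apply Finset.card_le_card
      intro f hf
      rw [Finset.mem_filter] at hf
      simp only [Finset.mem_filter, Finset.mem_univ, true_and]
      have hmem : e.map f ∈ l.toFinset := by
        by_contra hh
        exact hf.2 (Finset.mem_sdiff.2 ⟨mem_Ed.2 (map_nd f he), hh⟩)
      refine Finset.Subset.trans ?_ hlF
      unfold im
      rw [Finset.image_insert]
      exact Finset.insert_subset hmem (Cop_im hB hf.1)
    have hsplit' : (((Cop B π l).filter (fun f : Fin a ↪ Fin n => e.map f ∈ Ed n \ l.toFinset)).card : ℝ) +
      ((Cop B π l).filter (fun f : Fin a ↪ Fin n => ¬ e.map f ∈ Ed n \ l.toFinset)).card = (Cop B π l).card := by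
      exact_mod_cast hsplit
    have hz' : (((Cop B π l).filter (fun f : Fin a ↪ Fin n => ¬ e.map f ∈ Ed n \ l.toFinset)).card : ℝ) ≤ c / 2 * D :=
      le_trans (by exact_mod_cast hz) n1
    linarith
  · refine le_trans (sum_wt_sq B e π l _) (le_trans ?_ n2)
    rw [Nat.cast_le]
    apply Finset.card_le_card
    intro p hp
    simp only [Finset.mem_filter, Finset.mem_univ, true_and] at hp ⊢
    exact ⟨hp.1, (Cop_im hB hp.2.1).trans hlF, (Cop_im hB hp.2.2).trans hlF⟩

theorem color_pigeon {a n r : ℕ} (B : EdgeHistory (Fin a) r) (e : Sym2 (Fin a))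
    (π : PainterStrategy (Fin n) r) (l1 l2 : List (Sym2 (Fin n))) :
    ∑ x ∈ l2.toFinset, wt B e π l1 x ≤
      ∑ c : Fin r, ((Cop (B ++ [(e, c)]) π (l1 ++ l2)).card : ℝ) := by
  rw [sum_wt, ← Nat.cast_sum, Nat.cast_le]
  refine le_trans (Finset.card_le_card ?_) (Finset.card_biUnion_le (s := Finset.univ)
    (t := fun c => Cop (B ++ [(e, c)]) π (l1 ++ l2)))
  intro f hf
  rw [Finset.mem_filter, mem_Cop, mem_copies, List.mem_toFinset] at hf
  obtain ⟨h', q1, q2⟩ := run_append π l1 l2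
  rw [← q2] at hf
  obtain ⟨⟨x, c⟩, hx, hxe⟩ := List.mem_map.1 hf.2
  simp only at hxe
  subst hxe
  rw [Finset.mem_biUnion]
  refine ⟨c, Finset.mem_univ _, ?_⟩
  rw [mem_Cop, mem_copies, q1]
  intro y hy hd
  rw [List.mem_append] at hy ⊢
  rcases hy with hy | hy
  · exact Or.inl (hf.1 y hy hd)
  · rw [List.mem_singleton] at hy
    subst hy
    exact Or.inr hx

/-! ### Asymptotics -/

noncomputable def rho (N : ℕ → ℕ) (n : ℕ) : ℝ := 4 * (N n : ℝ) / (n : ℝ) ^ 2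

theorem Ed_bounds {n : ℕ} (hn : 2 ≤ n) : (n : ℝ) ^ 2 / 4 ≤ (Ed n).card ∧
    ((Ed n).card : ℝ) ≤ (n : ℝ) ^ 2 / 2 := by
  rw [card_Ed, Nat.cast_choose_two]
  have : (2 : ℝ) ≤ n := by exact_mod_cast hn
  constructor <;> nlinarith

theorem basics (d : ℝ) (hd : 0 < d) (N : ℕ → ℕ)
    (hN : (fun n : ℕ => (n : ℝ) ^ ((2 : ℝ) - 1 / d)) =o[atTop] (fun n : ℕ => (N n : ℝ)))
    (hN2 : (fun n : ℕ => (N n : ℝ)) =o[atTop] (fun n : ℕ => (n : ℝ) ^ 2))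
    (K η : ℝ) (hK : 0 < K) (hη : 0 < η) :
    ∀ᶠ n : ℕ in atTop, 2 ≤ n ∧ 0 < N n ∧ 0 < rho N n ∧ rho N n ≤ η ∧
      (N n : ℝ) ≤ rho N n * (Ed n).card ∧ rho N n * (Ed n).card ≤ 2 * N n ∧ 0 < (Ed n).card ∧
      K ≤ n * rho N n ^ d := by
  have hC : 0 < K ^ (1 / d) := Real.rpow_pos_of_pos hK _
  have e1 := hN.def (c := 1 / K ^ (1 / d)) (by positivity)
  have e2 := hN2.def (c := η / 4) (by positivity)
  filter_upwards [e1, e2, eventually_ge_atTop 2] with n h1 h2 hn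
  have hn0 : (0 : ℝ) < n := by exact_mod_cast (by omega : 0 < n)
  have hp : 0 < (n : ℝ) ^ ((2 : ℝ) - 1 / d) := Real.rpow_pos_of_pos hn0 _
  rw [Real.norm_of_nonneg hp.le, Real.norm_of_nonneg (Nat.cast_nonneg _)] at h1
  rw [Real.norm_of_nonneg (Nat.cast_nonneg _), Real.norm_of_nonneg (by positivity)] at h2
  have hNpos : 0 < N n := by
    rcases Nat.eq_zero_or_pos (N n) with h | h
    · rw [h, Nat.cast_zero, mul_zero] at h1; linarith
    · exact h
  have hNr : (0 : ℝ) < N n := by exact_mod_cast hNpos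
  have hρ : 0 < rho N n := by unfold rho; positivity
  obtain ⟨b1, b2⟩ := Ed_bounds hn
  refine ⟨hn, hNpos, hρ, ?_, ?_, ?_, ?_, ?_⟩
  · unfold rho
    rw [div_le_iff₀ (by positivity)]; linarith
  · calc (N n : ℝ) = rho N n * ((n : ℝ) ^ 2 / 4) := by unfold rho; field_simp
      _ ≤ _ := by gcongr
  · calc _ ≤ rho N n * ((n : ℝ) ^ 2 / 2) := by gcongr
      _ = _ := by unfold rho; field_simp; ring
  · have : (0 : ℝ) < (Ed n).card := lt_of_lt_of_le (by positivity) b1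
    exact_mod_cast this
  · -- rho ≥ K^(1/d) n^(-1/d)
    have g1 : K ^ (1 / d) * (n : ℝ) ^ (-(1 / d)) ≤ rho N n := by
      have g2 : K ^ (1 / d) * (n : ℝ) ^ ((2 : ℝ) - 1 / d) ≤ N n := by
        rw [one_div_mul_eq_div, le_div_iff₀ hC] at h1
        linarith
      have g3 : (n : ℝ) ^ ((2 : ℝ) - 1 / d) = (n : ℝ) ^ (-(1 / d)) * (n : ℝ) ^ 2 := by
        rw [← Real.rpow_natCast (n : ℝ) 2, ← Real.rpow_add hn0]
        congr 1; push_cast; ring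
      rw [g3] at g2
      unfold rho
      rw [le_div_iff₀ (by positivity)]
      nlinarith
    have g4 : (K ^ (1 / d) * (n : ℝ) ^ (-(1 / d))) ^ d = K * (n : ℝ)⁻¹ := by
      rw [Real.mul_rpow hC.le (Real.rpow_nonneg hn0.le _), ← Real.rpow_mul hK.le,
        ← Real.rpow_mul hn0.le]
      have i1 : 1 / d * d = 1 := by field_simp
      have i2 : -(1 / d) * d = -1 := by field_simp
      rw [i1, i2, Real.rpow_one, Real.rpow_neg_one]
    have g5 := Real.rpow_le_rpow (by positivity) g1 hd.le
    rw [g4] at g5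
    calc K = n * (K * (n : ℝ)⁻¹) := by field_simp
      _ ≤ _ := by gcongr

theorem omega_bound {a n : ℕ} {d ρ : ℝ} (hρ0 : 0 < ρ) (hρ1 : ρ ≤ 1)
    (h1 : 1 ≤ n * ρ ^ d) {S : Finset (Sym2 (Fin a))} {e : Sym2 (Fin a)}
    (hS : ∀ x ∈ S, ¬ x.IsDiag) (he : ¬ e.IsDiag) (heS : e ∉ S)
    (h : DensityLE (SimpleGraph.fromEdgeSet (insert e (↑S : Set (Sym2 (Fin a))))) d)
    (J : Finset (Fin a)) (hJ : ∀ v ∈ e, v ∈ J) :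
    n * ρ ^ d ≤ (n : ℝ) ^ J.card * ρ ^ ((S.filter (fun x => ∀ v ∈ x, v ∈ J)).card + 1) := by
  have hdens := density_use hS he heS h J hJ
  have hJ0 : J.card ≠ 0 := by
    intro h0
    rw [Finset.card_eq_zero] at h0
    subst h0
    induction e using Sym2.ind with
    | _ u v => exact absurd (hJ u (by simp)) (by simp)
  calc n * ρ ^ d ≤ (n * ρ ^ d) ^ J.card := le_self_pow₀ h1 hJ0
    _ = (n : ℝ) ^ J.card * ρ ^ (d * J.card) := by
        rw [mul_pow, ← Real.rpow_natCast (ρ ^ d), ← Real.rpow_mul hρ0.le]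
    _ ≤ (n : ℝ) ^ J.card *
        ρ ^ (((S.filter (fun x => ∀ v ∈ x, v ∈ J)).card + 1 : ℕ) : ℝ) := by
        gcongr (n : ℝ) ^ J.card * ?_
        exact Real.rpow_le_rpow_of_exponent_ge hρ0 hρ1 hdens
    _ = _ := by rw [Real.rpow_natCast]

def GoodEv {a n r : ℕ} (T : BuilderTree (Fin a) r) (π : PainterStrategy (Fin n) r) (k : ℕ) (x : ℝ)
    (l : List (Sym2 (Fin n))) : Prop :=
  HasLeafCopy T (runPainter π l) ∨ ∃ B ∈ T.nodeHistsAt k, x ≤ ((Cop B π l).card : ℝ)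

theorem leaf_mono {a n r : ℕ} {T : BuilderTree (Fin a) r} {π : PainterStrategy (Fin n) r}
    {l1 l2 : List (Sym2 (Fin n))} (h : HasLeafCopy T (runPainter π l1)) :
    HasLeafCopy T (runPainter π (l1 ++ l2)) := by
  obtain ⟨B, hB, f, hf⟩ := h
  obtain ⟨h', q1, _⟩ := run_append π l1 l2
  refine ⟨B, hB, f, copies_mono ?_ hf⟩
  intro x hx
  rw [q1]; exact List.mem_append_left _ hx

theorem take_split {α : Type} (l : List α) {t' t : ℕ} (h : t' ≤ t) :
    l.take t = l.take t' ++ (l.take t).drop t' := by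
  conv_lhs => rw [← List.take_append_drop t' (l.take t)]
  rw [List.take_take, min_eq_left h]

theorem perB {r a : ℕ} (hr : 2 ≤ r) {d : ℝ} (hd : 0 < d)
    (T : BuilderTree (Fin a) r) (hTp : T.Proper []) (hTd : T.LegalDensity d ∅)
    (N : ℕ → ℕ)
    (hN : (fun n : ℕ => (n : ℝ) ^ ((2 : ℝ) - 1 / d)) =o[atTop] (fun n : ℕ => (N n : ℝ)))
    (hN2 : (fun n : ℕ => (N n : ℝ)) =o[atTop] (fun n : ℕ => (n : ℝ) ^ 2))
    (k : ℕ) (π : (n : ℕ) → PainterStrategy (Fin n) r)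
    (B : EdgeHistory (Fin a) r) (hB : B ∈ T.nodeHistsAt k)
    (t : ℕ → ℕ) (ht : ∀ n, t n ≤ N n) (δ : ℝ) (hδ : 0 < δ)
    (htδ : ∀ᶠ n in atTop, δ * N n ≤ t n) (c : ℝ) (hc : 0 < c) (ε : ℝ) (hε : 0 < ε) :
    ∀ᶠ n : ℕ in atTop, (((Om n (N n)).filter (fun F =>
      c * ((n : ℝ) ^ a * rho N n ^ k) ≤ ((Cop B (π n) ((List.ofFn F).take (t n / 2))).card : ℝ) ∧
      ¬ GoodEv T (π n) (k + 1) (δ / 4 * c / 4 / r * ((n : ℝ) ^ a * rho N n ^ (k + 1)))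
        ((List.ofFn F).take (t n)))).card : ℝ) ≤ ε * (Om n (N n)).card := by
  have hset : ({e | e ∈ ([] : List (Sym2 (Fin a)))} : Set (Sym2 (Fin a))) = ∅ := by ext; simp
  obtain ⟨i1, i2, i3, i4⟩ := tree_step k T [] hTp (by rw [hset]; exact hTd) B hB
  have i3' : ∀ x ∈ B.map Prod.fst, ¬ x.IsDiag := fun x hx => (i3 x hx).1
  rcases i4 with hleaf | ⟨e, he, _, heB, hdens, hchild⟩
  · filter_upwards [basics d hd N hN hN2 1 1 one_pos one_pos] with n hn
    obtain ⟨hn2, hN0, hρ0, -⟩ := hn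
    have : (Om n (N n)).filter (fun F =>
      c * ((n : ℝ) ^ a * rho N n ^ k) ≤ ((Cop B (π n) ((List.ofFn F).take (t n / 2))).card : ℝ) ∧
      ¬ GoodEv T (π n) (k + 1) (δ / 4 * c / 4 / r * ((n : ℝ) ^ a * rho N n ^ (k + 1)))
        ((List.ofFn F).take (t n))) = ∅ := by
      apply Finset.filter_eq_empty_iff.2
      rintro F - ⟨h1, h2⟩
      apply h2
      left
      rw [take_split (List.ofFn F) (Nat.div_le_self (t n) 2)]
      apply leaf_mono
      refine ⟨B, hleaf, ?_⟩
      have hn0 : (0 : ℝ) < n := by exact_mod_cast (by omega : 0 < n)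
      have hpos : (0 : ℝ) < (Cop B (π n) ((List.ofFn F).take (t n / 2))).card :=
        lt_of_lt_of_le (by positivity) h1
      obtain ⟨f, hf⟩ := Finset.card_pos.1 (by exact_mod_cast hpos)
      exact ⟨f, mem_Cop.1 hf⟩
    rw [this]
    simp only [Finset.card_empty, Nat.cast_zero]
    positivity
  · have hdens' : DensityLE (SimpleGraph.fromEdgeSet
        (insert e (↑(B.map Prod.fst).toFinset : Set (Sym2 (Fin a))))) d := by
      convert hdens using 3
      ext; simp
    have hr0 : (0 : ℝ) < r := by exact_mod_cast (by omega : 0 < r)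
    set κ := δ / 4 with hκ
    have hκ0 : 0 < κ := by positivity
    set θ := ε * (κ * c ^ 2) / 48 with hθ
    have hθ0 : 0 < θ := by positivity
    set Cst : ℝ := 2 ^ a * a ^ a with hCst
    have hCst0 : 0 ≤ Cst := by positivity
    filter_upwards [basics d hd N hN hN2 (1 + 3 * Cst / (ε * θ)) (min 1 (ε * c / 6))
      (by positivity) (by positivity), htδ] with n hn htn
    obtain ⟨hn2, hN0, hρ0, hρη, hρN, hρE, hE, hω⟩ := hn
    have hρ1 : rho N n ≤ 1 := hρη.trans (min_le_left _ _)
    have hρ2 : rho N n ≤ ε * c / 6 := hρη.trans (min_le_right _ _)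
    have hNr : (0 : ℝ) < N n := by exact_mod_cast hN0
    have ht0 : 0 < t n := by
      have : (0 : ℝ) < t n := lt_of_lt_of_le (by positivity) htn
      exact_mod_cast this
    set ω := n * rho N n ^ d with hωdef
    have hnn : 0 ≤ 3 * Cst / (ε * θ) := by positivity
    have hω1 : 1 ≤ ω := by linarith
    have hω0 : 0 < ω := by linarith
    have htt : κ * rho N n * (Ed n).card ≤ ((t n - t n / 2 : ℕ) : ℝ) := by
      have q1 : (t n : ℝ) / 2 ≤ ((t n - t n / 2 : ℕ) : ℝ) := by
        rw [div_le_iff₀ (by norm_num)]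
        exact_mod_cast (by omega : t n ≤ (t n - t n / 2) * 2)
      calc κ * rho N n * (Ed n).card = κ * (rho N n * (Ed n).card) := by ring
        _ ≤ κ * (2 * N n) := by gcongr
        _ = δ * N n / 2 := by rw [hκ]; ring
        _ ≤ t n / 2 := by gcongr
        _ ≤ _ := q1
    have hstep := step_bound (N := N n) B e i3' i1 he heB (π n) (t n / 2) (t n) (by omega) (ht n)
      κ (rho N n) c θ ω hκ0 hρ0 hρ1 hc hθ0 hω0 (by omega) hρN hE htt
      (fun J hJ => omega_bound hρ0 hρ1 hω1 (fun x hx => i3' x (List.mem_toFinset.1 hx)) he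
        (fun h => heB (List.mem_toFinset.1 h)) hdens' J hJ)
    refine le_trans ?_ (hstep.trans ?_)
    · rw [Nat.cast_le]
      apply Finset.card_le_card
      intro F hF
      rw [Finset.mem_filter] at hF ⊢
      obtain ⟨hF1, hF2, hF3⟩ := hF
      refine ⟨hF1, by rw [i2]; exact hF2, ?_⟩
      by_contra hge
      rw [not_lt, i2] at hge
      apply hF3
      right
      have hp := color_pigeon B e (π n) ((List.ofFn F).take (t n / 2))
        (((List.ofFn F).take (t n)).drop (t n / 2))
      rw [← take_split (List.ofFn F) (Nat.div_le_self (t n) 2)] at hp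
      by_contra hno
      push Not at hno
      have : ∑ c' : Fin r, ((Cop (B ++ [(e, c')]) (π n) ((List.ofFn F).take (t n))).card : ℝ) <
          ∑ c' : Fin r, (κ * c / 4 / r * ((n : ℝ) ^ a * rho N n ^ (k + 1))) := by
        apply Finset.sum_lt_sum_of_nonempty
        · exact ⟨⟨0, by omega⟩, Finset.mem_univ _⟩
        · intro c' _
          exact hno _ (hchild c')
      rw [Finset.sum_const, Finset.card_univ, Fintype.card_fin, nsmul_eq_mul] at this
      have h3 : (r : ℝ) * (κ * c / 4 / r * ((n : ℝ) ^ a * rho N n ^ (k + 1))) =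
          κ * c / 4 * ((n : ℝ) ^ a * rho N n ^ k) * rho N n := by
        field_simp
        ring
      linarith
    · gcongr
      have j1 : 2 * rho N n / c ≤ ε / 3 := by
        rw [div_le_iff₀ hc]; linarith
      have j2 : Cst / (ω * θ) ≤ ε / 3 := by
        rw [div_le_iff₀ (by positivity)]
        have : 3 * Cst / (ε * θ) ≤ ω := by linarith
        rw [div_le_iff₀ (by positivity)] at this
        linarith
      have j3 : 16 * θ / (κ * c ^ 2) = ε / 3 := by
        rw [hθ]; field_simp; norm_num
      linarith

theorem leaf_case {a r : ℕ} {n : ℕ} (hn : a ≤ n) (H : EdgeHistory (Fin n) r) :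
    HasLeafCopy (BuilderTree.leaf : BuilderTree (Fin a) r) H := by
  refine ⟨[], by simp [BuilderTree.leafHists], Fin.castLEEmb hn, ?_⟩
  rw [mem_copies]; simp

theorem d_half {a r : ℕ} {d : ℝ} (e : Sym2 (Fin a)) (child : Fin r → BuilderTree (Fin a) r)
    (hTp : (BuilderTree.node e child).Proper [])
    (hTd : (BuilderTree.node e child).LegalDensity d ∅) : 1 ≤ d * 2 := by
  have := density_use (S := ∅) (e := e) (d := d) (by simp) hTp.1 (by simp)
    (by simpa using hTd.1) e.toFinset (by intro v hv; simpa using hv)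
  rw [Sym2.card_toFinset_of_not_isDiag e hTp.1] at this
  simpa using this

theorem main_ind {r a : ℕ} (hr : 2 ≤ r) {d : ℝ} (hd : 0 < d) (hd2 : 1 ≤ d * 2)
    (T : BuilderTree (Fin a) r) (hTp : T.Proper []) (hTd : T.LegalDensity d ∅)
    (N : ℕ → ℕ)
    (hN : (fun n : ℕ => (n : ℝ) ^ ((2 : ℝ) - 1 / d)) =o[atTop] (fun n : ℕ => (N n : ℝ)))
    (hN2 : (fun n : ℕ => (N n : ℝ)) =o[atTop] (fun n : ℕ => (n : ℝ) ^ 2))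
    (π : (n : ℕ) → PainterStrategy (Fin n) r) (k : ℕ) :
    ∀ (t : ℕ → ℕ) (_ : ∀ n, t n ≤ N n) (δ : ℝ) (_ : 0 < δ)
    (_ : ∀ᶠ n in atTop, δ * N n ≤ t n), ∃ c : ℝ, 0 < c ∧ ∀ ε : ℝ, 0 < ε →
    ∀ᶠ n : ℕ in atTop, (((Om n (N n)).filter (fun F =>
      ¬ GoodEv T (π n) k (c * ((n : ℝ) ^ a * rho N n ^ k))
        ((List.ofFn F).take (t n)))).card : ℝ) ≤ ε * (Om n (N n)).card := by
  induction k with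
  | zero =>
    intro t _ δ _ _
    refine ⟨(1 / 2) ^ a, by positivity, fun ε hε => ?_⟩
    filter_upwards [eventually_ge_atTop (2 * a)] with n hn
    have : (Om n (N n)).filter (fun F =>
      ¬ GoodEv T (π n) 0 ((1 / 2) ^ a * ((n : ℝ) ^ a * rho N n ^ 0))
        ((List.ofFn F).take (t n))) = ∅ := by
      apply Finset.filter_eq_empty_iff.2
      rintro F - h
      apply h
      right
      refine ⟨[], by cases T <;> simp [BuilderTree.nodeHistsAt], ?_⟩
      have hu : Cop ([] : EdgeHistory (Fin a) r) (π n) ((List.ofFn F).take (t n)) = Finset.univ := by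
        ext f; simp [mem_Cop, mem_copies]
      rw [hu, Finset.card_univ, Fintype.card_embedding_eq, Fintype.card_fin, Fintype.card_fin,
        pow_zero, mul_one, ← mul_pow]
      have h1 := Nat.pow_sub_le_descFactorial n a
      calc (1 / 2 * (n : ℝ)) ^ a ≤ ((n + 1 - a : ℕ) : ℝ) ^ a := by
            gcongr
            rw [one_div_mul_eq_div, div_le_iff₀ (by norm_num)]
            exact_mod_cast (by omega : n ≤ (n + 1 - a) * 2)
        _ ≤ _ := by exact_mod_cast h1
    rw [this]
    simp only [Finset.card_empty, Nat.cast_zero]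
    positivity
  | succ k ih =>
    intro t ht δ hδ htδ
    have hlarge : ∀ᶠ n in atTop, δ / 3 * N n ≤ ((t n / 2 : ℕ) : ℝ) := by
      have e1 := hN.def (c := δ / 2) (by positivity)
      filter_upwards [e1, htδ, eventually_ge_atTop 1] with n h1 h2 hn
      have hn1 : (1 : ℝ) ≤ n := by exact_mod_cast hn
      have hexp : 0 ≤ (2 : ℝ) - 1 / d := by
        rw [sub_nonneg, div_le_iff₀ hd]; linarith
      have hp := Real.one_le_rpow hn1 hexp
      rw [Real.norm_of_nonneg (by linarith), Real.norm_of_nonneg (Nat.cast_nonneg _)] at h1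
      have h3 : (2 : ℝ) ≤ t n := by linarith
      have h4 : 2 ≤ t n := by exact_mod_cast h3
      have h5 : t n ≤ 3 * (t n / 2) := by omega
      have h6 : (t n : ℝ) ≤ 3 * ((t n / 2 : ℕ) : ℝ) := by exact_mod_cast h5
      linarith
    obtain ⟨c, hc, hih⟩ := ih (fun n => t n / 2) (fun n => (Nat.div_le_self _ _).trans (ht n))
      (δ / 3) (by positivity) hlarge
    have hr0 : (0 : ℝ) < r := by exact_mod_cast (by omega : 0 < r)
    refine ⟨δ / 4 * c / 4 / r, by positivity, fun ε hε => ?_⟩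
    have hfin := nodes_finite k T
    set Nd := hfin.toFinset with hNd
    have hper := (Filter.eventually_all_finset Nd).2 (fun B hB =>
      perB hr hd T hTp hTd N hN hN2 k π B (hfin.mem_toFinset.1 hB) t ht δ hδ htδ c hc
        (ε / 2 / (Nd.card + 1)) (by positivity))
    filter_upwards [hih (ε / 2) (by positivity), hper] with n h1 h2
    have hsub : (Om n (N n)).filter (fun F =>
        ¬ GoodEv T (π n) (k + 1) (δ / 4 * c / 4 / r * ((n : ℝ) ^ a * rho N n ^ (k + 1)))
        ((List.ofFn F).take (t n))) ⊆
        (Om n (N n)).filter (fun F =>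
          ¬ GoodEv T (π n) k (c * ((n : ℝ) ^ a * rho N n ^ k)) ((List.ofFn F).take (t n / 2))) ∪
        Nd.biUnion (fun B => (Om n (N n)).filter (fun F =>
      c * ((n : ℝ) ^ a * rho N n ^ k) ≤ ((Cop B (π n) ((List.ofFn F).take (t n / 2))).card : ℝ) ∧
      ¬ GoodEv T (π n) (k + 1) (δ / 4 * c / 4 / r * ((n : ℝ) ^ a * rho N n ^ (k + 1)))
        ((List.ofFn F).take (t n)))) := by
      intro F hF
      rw [Finset.mem_filter] at hF
      rw [Finset.mem_union, Finset.mem_filter, Finset.mem_biUnion]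
      by_cases hg : GoodEv T (π n) k (c * ((n : ℝ) ^ a * rho N n ^ k))
          ((List.ofFn F).take (t n / 2))
      · right
        rcases hg with hl | ⟨B, hB, hcop⟩
        · exfalso
          apply hF.2
          left
          rw [take_split (List.ofFn F) (Nat.div_le_self (t n) 2)]
          exact leaf_mono hl
        · exact ⟨B, hfin.mem_toFinset.2 hB, Finset.mem_filter.2 ⟨hF.1, hcop, hF.2⟩⟩
      · exact Or.inl ⟨hF.1, hg⟩
    have hcard := (Finset.card_le_card hsub).trans (Finset.card_union_le _ _)
    have hcard2 := hcard.trans (Nat.add_le_add_left Finset.card_biUnion_le _)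
    have hcard3 : ((((Om n (N n)).filter (fun F =>
        ¬ GoodEv T (π n) (k + 1) (δ / 4 * c / 4 / r * ((n : ℝ) ^ a * rho N n ^ (k + 1)))
        ((List.ofFn F).take (t n)))).card : ℕ) : ℝ) ≤ _ := Nat.cast_le.2 hcard2
    refine hcard3.trans ?_
    push_cast
    have hs := Finset.sum_le_sum h2
    rw [Finset.sum_const, nsmul_eq_mul] at hs
    have hO : (0 : ℝ) ≤ (Om n (N n)).card := Nat.cast_nonneg _
    have hfrac : (Nd.card : ℝ) * (ε / 2 / (Nd.card + 1) * (Om n (N n)).card) ≤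
        ε / 2 * (Om n (N n)).card := by
      have : (Nd.card : ℝ) * (ε / 2 / (Nd.card + 1)) ≤ ε / 2 := by
        rw [mul_div_assoc', div_le_iff₀ (by positivity)]
        nlinarith
      calc _ = ((Nd.card : ℝ) * (ε / 2 / (Nd.card + 1))) * (Om n (N n)).card := by ring
        _ ≤ _ := by gcongr
    have : ε * ((Om n (N n)).card : ℝ) = ε / 2 * (Om n (N n)).card + ε / 2 * (Om n (N n)).card := by
      ring
    rw [this]
    exact add_le_add h1 (hs.trans hfrac)

theorem Om_nonempty {n N : ℕ} (h : N ≤ (Ed n).card) : (Om n N).Nonempty := by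
  have : Nonempty (Fin N ↪ {x // x ∈ Ed n}) := by
    apply Function.Embedding.nonempty_of_card_le
    simpa using h
  obtain ⟨f⟩ := this
  refine ⟨fun i => (f i).1, mem_Om.2 ⟨fun i j hij => f.injective (Subtype.ext hij), fun i => ?_⟩⟩
  exact mem_Ed.1 (f i).2

theorem onlineProb_eq {n N : ℕ} (P : (Fin N → Sym2 (Fin n)) → Prop) (hne : (Om n N).Nonempty) :
    onlineProb n N P = 1 - (((Om n N).filter (fun F => ¬ P F)).card : ℝ) / (Om n N).card := by
  have e1 : {f : Fin N → Sym2 (Fin n) | ValidSeqFun f ∧ P f} =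
      ((Om n N).filter (fun F => P F) : Finset _) := by
    ext f; simp [mem_Om]
  have e2 : {f : Fin N → Sym2 (Fin n) | ValidSeqFun f} = (Om n N : Finset _) := by
    ext f; simp [mem_Om]
  unfold onlineProb
  rw [e1, e2, Set.ncard_coe_finset, Set.ncard_coe_finset]
  have h0 : (0 : ℝ) < (Om n N).card := by exact_mod_cast Finset.card_pos.2 hne
  have := Finset.card_filter_add_card_filter_not (s := Om n N) (fun F => P F)
  have h' : (((Om n N).filter (fun F => P F)).card : ℝ) + ((Om n N).filter (fun F => ¬ P F)).card =
    (Om n N).card := by exact_mod_cast this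
  rw [eq_sub_iff_add_eq, ← add_div, h', div_self h0.ne']

theorem prob_tendsto (d : ℝ) (hd : 0 < d) (N : ℕ → ℕ)
    (hN : (fun n : ℕ => (n : ℝ) ^ ((2 : ℝ) - 1 / d)) =o[atTop] (fun n : ℕ => (N n : ℝ)))
    (hN2 : (fun n : ℕ => (N n : ℝ)) =o[atTop] (fun n : ℕ => (n : ℝ) ^ 2))
    (P : (n : ℕ) → (Fin (N n) → Sym2 (Fin n)) → Prop)
    (h : ∀ ε : ℝ, 0 < ε → ∀ᶠ n : ℕ in atTop, ∃ s : Finset (Fin (N n) → Sym2 (Fin n)),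
      (∀ F ∈ Om n (N n), ¬ P n F → F ∈ s) ∧ (s.card : ℝ) ≤ ε * (Om n (N n)).card) :
    Tendsto (fun n => onlineProb n (N n) (P n)) atTop (nhds 1) := by
  rw [Metric.tendsto_nhds]
  intro ε hε
  filter_upwards [h (ε / 2) (by positivity), basics d hd N hN hN2 1 1 one_pos one_pos] with n h1 hb
  obtain ⟨hn2, hN0, hρ0, hρ1, hρN, hρE, hE, hω⟩ := hb
  have hne : (Om n (N n)).Nonempty := by
    apply Om_nonempty
    have : (N n : ℝ) ≤ (Ed n).card := by
      refine hρN.trans ?_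
      have := mul_le_mul_of_nonneg_right hρ1 (Nat.cast_nonneg (α := ℝ) (Ed n).card)
      linarith
    exact_mod_cast this
  have h0 : (0 : ℝ) < (Om n (N n)).card := by exact_mod_cast Finset.card_pos.2 hne
  rw [onlineProb_eq _ hne, Real.dist_eq]
  have h2 : (((Om n (N n)).filter (fun F => ¬ P n F)).card : ℝ) / (Om n (N n)).card ≤ ε / 2 := by
    rw [div_le_iff₀ h0]
    obtain ⟨s, hs, hc⟩ := h1
    refine le_trans ?_ hc
    rw [Nat.cast_le]
    apply Finset.card_le_card
    intro F hF
    rw [Finset.mem_filter] at hF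
    exact hs F hF.1 hF.2
  have h3 : 0 ≤ (((Om n (N n)).filter (fun F => ¬ P n F)).card : ℝ) / (Om n (N n)).card := by
    positivity
  rw [abs_lt]
  constructor <;> linarith

/-- Claim 8 of the paper. Let `𝒯` be a Builder strategy tree with `r ≥ 2`
colors on a board with `a ≥ 1` vertices that is legal for density restriction `d > 0`, and let
`N(n)` satisfy `n^(2-1/d) = o(N(n))` and `N(n) = o(n²)`. Then for every `k ≥ 0` and every
sequence of online Painter strategies there is a constant `c > 0` such that a.a.s. the colored
board after `N(n)` steps contains a copy of a leaf of `𝒯`, or there is a node `B` at depth `k`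
of `𝒯` such that the board contains at least `c · n^a · (N(n)/n²)^k` copies of `B`. -/
theorem statement4 (r a : ℕ) (hr : 2 ≤ r) (ha : 1 ≤ a) (d : ℝ) (hd : 0 < d)
    (T : BuilderTree (Fin a) r) (hTp : T.Proper []) (hTd : T.LegalDensity d ∅)
    (N : ℕ → ℕ)
    (hN : (fun n : ℕ => (n : ℝ) ^ ((2 : ℝ) - 1 / d)) =o[atTop] (fun n : ℕ => (N n : ℝ)))
    (hN2 : (fun n : ℕ => (N n : ℝ)) =o[atTop] (fun n : ℕ => (n : ℝ) ^ 2))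
    (k : ℕ) (π : (n : ℕ) → PainterStrategy (Fin n) r) :
    ∃ c : ℝ, 0 < c ∧
      Tendsto (fun n : ℕ => onlineProb n (N n)
          (fun f =>
            HasLeafCopy T (runPainter (π n) (List.ofFn f)) ∨
            ∃ B ∈ T.nodeHistsAt k,
              c * (n : ℝ) ^ a * ((N n : ℝ) / (n : ℝ) ^ 2) ^ k ≤
                ((ColoredCopies B (runPainter (π n) (List.ofFn f))).ncard : ℝ)))
        atTop (nhds 1) := by
  cases hT : T with
  | leaf =>
    refine ⟨1, one_pos, ?_⟩
    apply prob_tendsto d hd N hN hN2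
    intro ε hε
    filter_upwards [eventually_ge_atTop a] with n hn
    refine ⟨∅, fun F _ h => absurd (Or.inl (leaf_case hn _)) h, ?_⟩
    simp only [Finset.card_empty, Nat.cast_zero]
    positivity
  | node e child =>
    subst hT
    have hd2 := d_half e child hTp hTd
    obtain ⟨c, hc, h⟩ := main_ind hr hd hd2 _ hTp hTd N hN hN2 π k N (fun _ => le_rfl) 1 one_pos
      (Eventually.of_forall fun n => by rw [one_mul])
    refine ⟨c * 4 ^ k, by positivity, ?_⟩
    apply prob_tendsto d hd N hN hN2
    intro ε hε
    filter_upwards [h ε hε] with n hn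
    refine ⟨_, ?_, hn⟩
    intro F hF hP
    rw [Finset.mem_filter]
    refine ⟨hF, fun hg => hP ?_⟩
    have htake : (List.ofFn F).take (N n) = List.ofFn F := by
      apply List.take_of_length_le; simp
    rw [htake] at hg
    rcases hg with hg | ⟨B, hB, hx⟩
    · exact Or.inl hg
    · refine Or.inr ⟨B, hB, ?_⟩
      rw [card_Cop] at hx
      refine le_trans (le_of_eq ?_) hx
      unfold rho
      rw [mul_div_assoc, mul_pow]
      ring
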